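/- arXiv:1905.02288 — 2 statements merged into one kernel-verified Lean document; each statement's English description precedes it below -/
import Mathlib

section
/- Kouchnirenko–Bernstein theorem (equality case, two variables): for quasi-convenient coprime f, g ∈ ℂ[X,Y], the sum Σ_{P∈ℂ²} (f,g)_P equals ν∞(f,g) if and only if the pair (f,g) is nondegenerate at infinity, i.e. for every w = [p,q] with p > 0 or q > 0, init(f,w) and init(g,w) have no common zero in (ℂ*)². -/
open MvPolynomial MeasureTheory Pointwise

noncomputable section

/-- Polynomials in two complex variables. -/
abbrev P2 := MvPolynomial (Fin 2) ℂ

/-- The `w`-weight of a monomial exponent. -/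
def wt (w : ℝ × ℝ) (m : Fin 2 →₀ ℕ) : ℝ := w.1 * (m 0 : ℝ) + w.2 * (m 1 : ℝ)

/-- `d_w(f)`: maximal `w`-weight of a monomial of `f`. -/
def dw (w : ℝ × ℝ) (f : P2) : ℝ := sSup (wt w '' (f.support : Set (Fin 2 →₀ ℕ)))

open Classical in
/-- The initial form `init(f, w)`: sum of the monomials of `f` of maximal `w`-weight. -/
def initForm (w : ℝ × ℝ) (f : P2) : P2 :=
  ∑ m ∈ f.support, if wt w m = dw w f then monomial m (f.coeff m) else 0

/-- `f` is quasi-convenient: some pure power of `X` and some pure power of `Y`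
occur in `f` with nonzero coefficient. -/
def QuasiConvenient (f : P2) : Prop :=
  (∃ a : ℕ, f.coeff (Finsupp.single 0 a) ≠ 0) ∧
  (∃ b : ℕ, f.coeff (Finsupp.single 1 b) ≠ 0)

/-- The Newton diagram at infinity `Δ∞(f)`. -/
def newton (f : P2) : Set (ℝ × ℝ) :=
  convexHull ℝ ({(0, 0)} ∪ {p : ℝ × ℝ | ∃ m ∈ f.support, p = ((m 0 : ℝ), (m 1 : ℝ))})

/-- Area (2-dimensional Lebesgue measure) of a plane set. -/
def area (S : Set (ℝ × ℝ)) : ℝ := (volume S).toReal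

/-- `ν∞(f, g)`. -/
def nuInf (f g : P2) : ℝ := area (newton (f * g)) - area (newton f) - area (newton g)

/-- `f` is nondegenerate at infinity. -/
def NondegAtInf (f : P2) : Prop :=
  ∀ w : ℝ × ℝ, (0 < w.1 ∨ 0 < w.2) →
    ¬ ∃ x y : ℂ, x ≠ 0 ∧ y ≠ 0 ∧
      eval ![x, y] (initForm w f) = 0 ∧
      eval ![x, y] (pderiv 0 (initForm w f)) = 0 ∧
      eval ![x, y] (pderiv 1 (initForm w f)) = 0

/-- The pair `(f, g)` is nondegenerate at infinity. -/
def PairNondegAtInf (f g : P2) : Prop :=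
  ∀ w : ℝ × ℝ, (0 < w.1 ∨ 0 < w.2) →
    ¬ ∃ x y : ℂ, x ≠ 0 ∧ y ≠ 0 ∧
      eval ![x, y] (initForm w f) = 0 ∧ eval ![x, y] (initForm w g) = 0

/-- `g` and `h` have no common nonunit factor. -/
def CoprimeDiv (g h : P2) : Prop := ∀ d : P2, d ∣ g → d ∣ h → IsUnit d

/-- `f` is nearly irreducible: positive degree, and any two nonconstant factors
have a common zero in `ℂ²`. -/
def NearlyIrreducible (f : P2) : Prop :=
  0 < f.totalDegree ∧
  ∀ g h : P2, g ∣ f → h ∣ f → 0 < g.totalDegree → 0 < h.totalDegree →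
    ∃ x y : ℂ, eval ![x, y] g = 0 ∧ eval ![x, y] h = 0

/-- The maximal ideal of polynomials vanishing at a point `P ∈ ℂ²`. -/
def mIdeal (Pt : ℂ × ℂ) : Ideal P2 := RingHom.ker (eval ![Pt.1, Pt.2] : P2 →+* ℂ)

instance (Pt : ℂ × ℂ) : (mIdeal Pt).IsPrime := RingHom.ker_isPrime _

/-- Intersection multiplicity `(f, g)_P`: the `ℂ`-dimension of the quotient of the
local ring of `ℂ²` at `P` by the ideal generated by `f` and `g`. -/
def interMult (f g : P2) (Pt : ℂ × ℂ) : ℕ :=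
  Module.finrank ℂ
    (Localization.AtPrime (mIdeal Pt) ⧸
      Ideal.span {algebraMap P2 (Localization.AtPrime (mIdeal Pt)) f,
                  algebraMap P2 (Localization.AtPrime (mIdeal Pt)) g})

/-!
Let `V t` be the space of polynomials supported in the polygon `t • H + Δ f + Δ g`, where `Δ` is the
Newton diagram at infinity and `H` a polygon having an edge in every relevant direction, and let
`I t ⊆ V t ∩ (f, g)` consist of the `u * f + v * g` with `u` supported in `t • H + Δ g` and `v` in
`t • H + Δ f`. The Koszul relation and a lattice point count give `dim V t - dim I t = ν∞(f, g)` for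
every `t`. As `V t` surjects onto `ℂ[X, Y] ⧸ (f, g)` for large `t`, this quotient, whose dimension
is the sum of the intersection multiplicities, has dimension `ν∞(f, g)` if and only if
`I t = V t ∩ (f, g)` for large `t`. If the initial forms never have a common torus zero, a
representation `F = u * f + v * g` of some `F ∈ V t` can be corrected by syzygies of the initial
forms, one edge direction after the other, until `u` and `v` have the required supports. Conversely,
let `z` be a common torus zero of the initial forms in direction `w`. Modulo `(f, g)`, a monomial of
top `w`-weight in `V (t + 1)` is congruent to an element of `V t`, and the difference of the two
cannot lie in `I (t + 1)`, because the top `w`-part of every element of `I (t + 1)` vanishes at `z`.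
-/

/-! ### Support functions of lattice polygons -/

/-- The standard pairing of plane vectors, used both for lattice points and for real points. -/
def dot {R : Type*} [CommRing R] (u v : R × R) : R := u.1 * v.1 + u.2 * v.2

section Dot

variable {R : Type*} [CommRing R] (c : R) (u v w : R × R)

lemma dot_add_left : dot (u + v) w = dot u w + dot v w := by
  simp only [dot, Prod.fst_add, Prod.snd_add]; ring

lemma dot_add_right : dot u (v + w) = dot u v + dot u w := by
  simp only [dot, Prod.fst_add, Prod.snd_add]; ring

lemma dot_smul_left : dot (c • u) v = c * dot u v := by
  simp only [dot, Prod.smul_fst, Prod.smul_snd, smul_eq_mul]; ring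

lemma dot_smul_right : dot u (c • v) = c * dot u v := by
  simp only [dot, Prod.smul_fst, Prod.smul_snd, smul_eq_mul]; ring

lemma dot_sub_right : dot u (v - w) = dot u v - dot u w := by
  simp only [dot, Prod.fst_sub, Prod.snd_sub]; ring

lemma dot_neg_left : dot (-u) v = -dot u v := by
  simp only [dot, Prod.fst_neg, Prod.snd_neg]; ring

@[simp] lemma dot_zero_right : dot u 0 = 0 := by simp [dot]

end Dot

lemma nonpos_of_not_pos {α : Type*} [LinearOrder α] [Zero α] {w : α × α}
    (hw : ¬(0 < w.1 ∨ 0 < w.2)) : w ≤ 0 :=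
  ⟨not_lt.1 (not_or.1 hw).1, not_lt.1 (not_or.1 hw).2⟩

/-- `h` is the support function `w ↦ max_{m ∈ P} w · m` of a lattice polygon `P` in the first
quadrant containing the origin; the polygon itself is left implicit. -/
structure IsSupportFun (h : ℤ × ℤ → ℤ) : Prop where
  eq_zero_of_nonpos : ∀ w ≤ 0, h w = 0
  exists_dot_eq : ∀ w, ∃ m, dot w m = h w ∧ ∀ w', dot w' m ≤ h w'

namespace IsSupportFun

variable {h k : ℤ × ℤ → ℤ}

lemma zero : IsSupportFun 0 :=
  ⟨fun _ _ => rfl, fun w => ⟨0, by simp, by simp⟩⟩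

lemma add (hh : IsSupportFun h) (hk : IsSupportFun k) : IsSupportFun (h + k) := by
  refine ⟨fun w hw => ?_, fun w => ?_⟩
  · rw [Pi.add_apply, hh.eq_zero_of_nonpos w hw, hk.eq_zero_of_nonpos w hw, add_zero]
  · obtain ⟨m, hm, hm'⟩ := hh.exists_dot_eq w
    obtain ⟨n, hn, hn'⟩ := hk.exists_dot_eq w
    exact ⟨m + n, by rw [dot_add_right, hm, hn, Pi.add_apply],
      fun w' => (dot_add_right w' m n).trans_le (add_le_add (hm' w') (hn' w'))⟩

lemma sum {ι : Type*} (s : Finset ι) {h : ι → ℤ × ℤ → ℤ} (hh : ∀ i ∈ s, IsSupportFun (h i)) :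
    IsSupportFun (∑ i ∈ s, h i) :=
  Finset.sum_induction h IsSupportFun (fun _ _ => add) zero hh

lemma nsmul (hh : IsSupportFun h) (n : ℕ) : IsSupportFun (n • h) := by
  simpa only [Finset.sum_const, Finset.card_range] using sum (Finset.range n) fun _ _ => hh

variable (hh : IsSupportFun h)
include hh

lemma nonneg (w : ℤ × ℤ) : 0 ≤ h w := by
  obtain ⟨m, hm, hm'⟩ := hh.exists_dot_eq (-1, -1)
  have h₁ := hm' (-1, 0)
  have h₂ := hm' (0, -1)
  rw [hh.eq_zero_of_nonpos _ (by decide)] at hm h₁ h₂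
  simp only [dot] at hm h₁ h₂
  have hm₀ : m = 0 := Prod.ext (show m.1 = 0 by omega) (show m.2 = 0 by omega)
  simpa [hm₀] using hm' w

lemma mul_le_add {u v w : ℤ × ℤ} {x y z : ℤ} (hx : 0 ≤ x) (hy : 0 ≤ y)
    (hw : x • u + y • v = z • w) : z * h w ≤ x * h u + y * h v := by
  obtain ⟨m, hm, hm'⟩ := hh.exists_dot_eq w
  calc z * h w = x * dot u m + y * dot v m := by
        rw [← hm, ← dot_smul_left, ← hw, dot_add_left, dot_smul_left, dot_smul_left]
    _ ≤ x * h u + y * h v :=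
        add_le_add (mul_le_mul_of_nonneg_left (hm' u) hx) (mul_le_mul_of_nonneg_left (hm' v) hy)

lemma map_smul {y : ℤ} (hy : 0 ≤ y) (w : ℤ × ℤ) : h (y • w) = y * h w := by
  apply le_antisymm
  · simpa using hh.mul_le_add (u := w) (v := 0) (w := y • w) (z := 1) hy le_rfl (by simp)
  · simpa using hh.mul_le_add (u := y • w) (v := 0) (w := w) (z := y) zero_le_one le_rfl (by simp)

lemma lt_dot {m u v w : ℤ × ℤ} {x y z : ℤ} (hx : 0 < x) (hy : 0 ≤ y) (hz : 0 ≤ z)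
    (hw : x • u + y • v = z • w) (hu : h u < dot u m) (hv : h v < dot v m) : h w < dot w m := by
  refine lt_of_mul_lt_mul_left ?_ hz
  calc z * h w ≤ x * h u + y * h v := hh.mul_le_add hx.le hy hw
    _ < x * dot u m + y * dot v m :=
        add_lt_add_of_lt_of_le (mul_lt_mul_of_pos_left hu hx) (mul_le_mul_of_nonneg_left hv.le hy)
    _ = z * dot w m := by rw [← dot_smul_left z, ← hw, dot_add_left, dot_smul_left, dot_smul_left]

end IsSupportFun

/-! ### Counting lattice points along the Stern–Brocot tree -/

/-- The cones of depth less than `n` in the Stern–Brocot tree rooted at the cone spanned by `u` and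
`v`. The cone `(u, v)` is split along its mediant `u + v`. -/
def sternBrocotCones : ℕ → ℤ × ℤ → ℤ × ℤ → List ((ℤ × ℤ) × (ℤ × ℤ))
  | 0, _, _ => []
  | n + 1, u, v => (u, v) :: (sternBrocotCones n u (u + v) ++ sternBrocotCones n (u + v) v)

lemma exists_pos_smul_add_smul_of_mem_cones {n : ℕ} {u v : ℤ × ℤ} {c : (ℤ × ℤ) × (ℤ × ℤ)}
    (hc : c ∈ sternBrocotCones n u v) :
    ∃ x y : ℤ, 0 < x ∧ 0 < y ∧ c.1 + c.2 = x • u + y • v := by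
  induction n generalizing u v with
  | zero => simp [sternBrocotCones] at hc
  | succ n ih =>
    simp only [sternBrocotCones, List.mem_cons, List.mem_append] at hc
    rcases hc with rfl | hc | hc
    · exact ⟨1, 1, one_pos, one_pos, by simp⟩
    · obtain ⟨x, y, hx, hy, e⟩ := ih hc
      exact ⟨x + y, y, by omega, hy, by rw [e]; module⟩
    · obtain ⟨x, y, hx, hy, e⟩ := ih hc
      exact ⟨x, x + y, hx, by omega, by rw [e]; module⟩

lemma exists_mem_cones_of_isCoprime (n : ℕ) (u v : ℤ × ℤ) {x y : ℤ} (hx : 0 < x) (hy : 0 < y)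
    (hxy : IsCoprime x y) (hn : x + y ≤ n) :
    ∃ c ∈ sternBrocotCones n u v, c.1 + c.2 = x • u + y • v := by
  induction n generalizing u v x y with
  | zero => push_cast at hn; omega
  | succ n ih =>
    push_cast at hn
    simp only [sternBrocotCones, List.mem_cons, List.mem_append]
    rcases lt_trichotomy x y with hlt | rfl | hlt
    · obtain ⟨c, hc, e⟩ := ih (u + v) v hx (sub_pos.2 hlt)
        (by simpa [sub_eq_add_neg] using hxy.add_mul_left_right (-1)) (by omega)
      exact ⟨c, Or.inr (Or.inr hc), by rw [e]; module⟩
    · obtain rfl : x = 1 := by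
        have := Int.isUnit_iff.1 (isCoprime_self.1 hxy)
        omega
      exact ⟨(u, v), Or.inl rfl, by simp⟩
    · obtain ⟨c, hc, e⟩ := ih u (u + v) (sub_pos.2 hlt) hy
        (by simpa [sub_eq_add_neg] using hxy.add_mul_left_left (-1)) (by omega)
      exact ⟨c, Or.inr (Or.inl hc), by rw [e]; module⟩

/-- The failure of additivity of `h` on the cone `c`: the lattice size of the triangle which the
edge normal to the mediant cuts off from the corner of the edges normal to the sides of `c`. -/
def defect (h : ℤ × ℤ → ℤ) (c : (ℤ × ℤ) × (ℤ × ℤ)) : ℤ := h c.1 + h c.2 - h (c.1 + c.2)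

/-- The lattice points that satisfy the inequalities of `u` and `v` but not that of `u + v`. -/
def corner (h : ℤ × ℤ → ℤ) (u v : ℤ × ℤ) : Set (ℤ × ℤ) :=
  {m | dot u m ≤ h u ∧ dot v m ≤ h v ∧ h (u + v) < dot (u + v) m}

/-- The lattice points that satisfy the inequalities of `u` and `v` but violate that of some mediant
in the Stern–Brocot tree of depth `n` between them. -/
def cutOff (h : ℤ × ℤ → ℤ) (n : ℕ) (u v : ℤ × ℤ) : Set (ℤ × ℤ) :=
  {m | dot u m ≤ h u ∧ dot v m ≤ h v ∧
    ∃ c ∈ sternBrocotCones n u v, h (c.1 + c.2) < dot (c.1 + c.2) m}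

/-- The coordinates `(u · m, v · m)` on the lattice defined by a unimodular pair `u, v`. -/
def dotEquiv {u v : ℤ × ℤ} (hdet : u.1 * v.2 - u.2 * v.1 = 1) : ℤ × ℤ ≃ ℤ × ℤ where
  toFun m := (dot u m, dot v m)
  invFun p := (p.1 * v.2 - p.2 * u.2, p.2 * u.1 - p.1 * v.1)
  left_inv m := by
    ext <;> simp only [dot]
    · linear_combination m.1 * hdet
    · linear_combination m.2 * hdet
  right_inv p := by
    ext <;> simp only [dot]
    · linear_combination p.1 * hdet
    · linear_combination p.2 * hdet

lemma two_mul_card_triangle (k : ℕ) :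
    2 * ((Finset.range k).sigma fun i => Finset.range (k - i)).card = k * (k + 1) := by
  simp only [Finset.card_sigma, Finset.card_range]
  have hreflect : ∑ i ∈ Finset.range k, (k - i) = ∑ i ∈ Finset.range (k + 1), i := by
    rw [← Finset.sum_range_reflect _ (k + 1), Finset.sum_range_succ]
    simp
  rw [hreflect, mul_comm, Finset.sum_range_id_mul_two, Nat.add_sub_cancel, mul_comm]

lemma two_mul_ncard_triangle (a b : ℤ) {k : ℤ} (hk : 0 ≤ k) :
    {p : ℤ × ℤ | p.1 ≤ a ∧ p.2 ≤ b ∧ a + b - k < p.1 + p.2}.Finite ∧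
      2 * ({p : ℤ × ℤ | p.1 ≤ a ∧ p.2 ≤ b ∧ a + b - k < p.1 + p.2}.ncard : ℤ) = k * (k + 1) := by
  lift k to ℕ using hk
  let φ : (Σ _ : ℕ, ℕ) → ℤ × ℤ := fun p => (a - p.1, b - p.2)
  have hφ : Function.Injective φ := by
    rintro ⟨i, j⟩ ⟨i', j'⟩ hp
    simpa [φ] using hp
  have himage : {p : ℤ × ℤ | p.1 ≤ a ∧ p.2 ≤ b ∧ a + b - k < p.1 + p.2} =
      φ '' ((Finset.range k).sigma fun i => Finset.range (k - i)) := by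
    ext ⟨p, q⟩
    simp only [Set.mem_ofPred_eq, Set.mem_image, Finset.mem_coe, Finset.mem_sigma, Finset.mem_range,
      Sigma.exists, φ, Prod.mk.injEq]
    exact ⟨fun _ => ⟨(a - p).toNat, (b - q).toNat, by omega⟩, by rintro ⟨i, j, _⟩; omega⟩
  rw [himage, Set.ncard_image_of_injective _ hφ, Set.ncard_coe_finset]
  exact ⟨Set.toFinite _, mod_cast two_mul_card_triangle k⟩

lemma IsSupportFun.two_mul_ncard_corner {h : ℤ × ℤ → ℤ} (hh : IsSupportFun h) {u v : ℤ × ℤ}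
    (hdet : u.1 * v.2 - u.2 * v.1 = 1) :
    (corner h u v).Finite ∧
      2 * ((corner h u v).ncard : ℤ) = defect h (u, v) * (defect h (u, v) + 1) := by
  have hk : 0 ≤ defect h (u, v) := by
    have := hh.mul_le_add (u := u) (v := v) (w := u + v) (z := 1) zero_le_one zero_le_one (by simp)
    simp only [defect]
    omega
  have himage : corner h u v = (dotEquiv hdet).symm ''
      {p | p.1 ≤ h u ∧ p.2 ≤ h v ∧ h u + h v - defect h (u, v) < p.1 + p.2} := by
    rw [Equiv.image_symm_eq_preimage]
    ext m
    simp [corner, dotEquiv, defect, dot_add_left]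
  obtain ⟨hfin, hcard⟩ := two_mul_ncard_triangle (h u) (h v) hk
  rw [himage, Set.ncard_image_of_injective _ (Equiv.injective _)]
  exact ⟨hfin.image _, hcard⟩

section CutOff

variable {h : ℤ × ℤ → ℤ} (hh : IsSupportFun h)
include hh

lemma cutOff_succ (n : ℕ) (u v : ℤ × ℤ) :
    cutOff h (n + 1) u v = corner h u v ∪ (cutOff h n u (u + v) ∪ cutOff h n (u + v) v) := by
  ext m
  constructor
  · rintro ⟨hu, hv, c, hc, hlt⟩
    by_cases huv : h (u + v) < dot (u + v) m
    · exact Or.inl ⟨hu, hv, huv⟩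
    · simp only [sternBrocotCones, List.mem_cons, List.mem_append] at hc
      rcases hc with rfl | hc | hc
      · exact absurd hlt huv
      · exact Or.inr (Or.inl ⟨hu, not_lt.1 huv, c, hc, hlt⟩)
      · exact Or.inr (Or.inr ⟨not_lt.1 huv, hv, c, hc, hlt⟩)
  · rintro (⟨hu, hv, hlt⟩ | ⟨hu, huv, c, hc, hlt⟩ | ⟨huv, hv, c, hc, hlt⟩)
    · exact ⟨hu, hv, (u, v), by simp [sternBrocotCones], hlt⟩
    · refine ⟨hu, le_of_not_gt fun hv => huv.not_gt ?_, c, by simp [sternBrocotCones, hc], hlt⟩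
      obtain ⟨x, y, hx, hy, e⟩ := exists_pos_smul_add_smul_of_mem_cones hc
      exact hh.lt_dot one_pos hx.le (z := x + y) (by omega) (by rw [e]; module) hlt hv
    · refine ⟨le_of_not_gt fun hu => huv.not_gt ?_, hv, c, by simp [sternBrocotCones, hc], hlt⟩
      obtain ⟨x, y, hx, hy, e⟩ := exists_pos_smul_add_smul_of_mem_cones hc
      exact hh.lt_dot one_pos hy.le (z := x + y) (by omega) (by rw [e]; module) hlt hu

lemma disjoint_cutOff_of_add_eq_smul (n : ℕ) {u v w : ℤ × ℤ} {c : ℤ} (hc : 0 ≤ c)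
    (huw : u + w = c • v) : Disjoint (cutOff h n u v) (cutOff h n v w) := by
  rw [Set.disjoint_left]
  rintro m ⟨-, hv, a, ha, ha'⟩ ⟨-, -, b, hb, hb'⟩
  obtain ⟨x, y, hx, hy, ea⟩ := exists_pos_smul_add_smul_of_mem_cones ha
  obtain ⟨x', y', hx', hy', eb⟩ := exists_pos_smul_add_smul_of_mem_cones hb
  have hz : 0 ≤ c * (x * y') + y * y' + x * x' :=
    add_nonneg (add_nonneg (mul_nonneg hc (mul_pos hx hy').le) (mul_pos hy hy').le)
      (mul_pos hx hx').le
  refine hv.not_gt (hh.lt_dot hy' hx.le hz ?_ ha' hb')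
  obtain rfl : w = c • v - u := by rw [← huw]; abel
  rw [ea, eb]
  module

lemma disjoint_cutOff_neg (n : ℕ) (u v : ℤ × ℤ) :
    Disjoint (cutOff h n u v) (cutOff h n (-u) (-v)) := by
  rw [Set.disjoint_left]
  rintro m ⟨hu, -, a, ha, ha'⟩ ⟨hu', -, b, hb, hb'⟩
  obtain ⟨x, y, -, hy, ea⟩ := exists_pos_smul_add_smul_of_mem_cones ha
  obtain ⟨x', y', -, hy', eb⟩ := exists_pos_smul_add_smul_of_mem_cones hb
  rcases le_total (y' * x) (y * x') with hle | hle
  · exact hu'.not_gt (hh.lt_dot hy' hy.le (sub_nonneg.2 hle) (by rw [ea, eb]; module) ha' hb')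
  · exact hu.not_gt (hh.lt_dot hy' hy.le (sub_nonneg.2 hle) (by rw [ea, eb]; module) ha' hb')

lemma two_mul_ncard_cutOff (n : ℕ) {u v : ℤ × ℤ} (hdet : u.1 * v.2 - u.2 * v.1 = 1) :
    (cutOff h n u v).Finite ∧ 2 * ((cutOff h n u v).ncard : ℤ) =
      ((sternBrocotCones n u v).map fun c => defect h c * (defect h c + 1)).sum := by
  induction n generalizing u v with
  | zero =>
    have hempty : cutOff h 0 u v = ∅ := by ext; simp [cutOff, sternBrocotCones]
    simp [hempty, sternBrocotCones]
  | succ n ih =>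
    obtain ⟨f₀, c₀⟩ := hh.two_mul_ncard_corner hdet
    obtain ⟨f₁, c₁⟩ := ih (u := u) (v := u + v)
      (by simp only [Prod.fst_add, Prod.snd_add]; linear_combination hdet)
    obtain ⟨f₂, c₂⟩ := ih (u := u + v) (v := v)
      (by simp only [Prod.fst_add, Prod.snd_add]; linear_combination hdet)
    have d₀ : Disjoint (corner h u v) (cutOff h n u (u + v) ∪ cutOff h n (u + v) v) := by
      rw [Set.disjoint_left]
      rintro m ⟨-, -, hlt⟩ (⟨-, hle, -⟩ | ⟨hle, -⟩) <;> exact hle.not_gt hlt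
    have d₁ : Disjoint (cutOff h n u (u + v)) (cutOff h n (u + v) v) :=
      disjoint_cutOff_of_add_eq_smul hh n zero_le_one (one_smul ℤ _).symm
    rw [cutOff_succ hh, Set.ncard_union_eq d₀ f₀ (f₁.union f₂), Set.ncard_union_eq d₁ f₁ f₂]
    refine ⟨f₀.union (f₁.union f₂), ?_⟩
    simp only [sternBrocotCones, List.map_cons, List.map_append, List.sum_cons, List.sum_append]
    push_cast
    linarith

lemma dot_neg_le_of_mem_cutOff {n : ℕ} {u v m : ℤ × ℤ} (hm : m ∈ cutOff h n u v) :
    dot (-u) m ≤ h (-u) ∧ dot (-v) m ≤ h (-v) := by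
  obtain ⟨hu, hv, c, hc, hlt⟩ := hm
  obtain ⟨x, y, hx, hy, e⟩ := exists_pos_smul_add_smul_of_mem_cones hc
  refine ⟨le_of_not_gt fun hu' => hv.not_gt ?_, le_of_not_gt fun hv' => hu.not_gt ?_⟩
  · exact hh.lt_dot one_pos hx.le hy.le (by rw [e]; module) hlt hu'
  · exact hh.lt_dot one_pos hy.le hx.le (by rw [e]; module) hlt hv'

end CutOff

/-- The cones of depth less than `n` in the subdivision of the three quadrants of covectors that
have a positive coordinate. -/
def outerCones (n : ℕ) : List ((ℤ × ℤ) × (ℤ × ℤ)) :=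
  sternBrocotCones n (0, -1) (1, 0) ++
    (sternBrocotCones n (1, 0) (0, 1) ++ sternBrocotCones n (0, 1) (-1, 0))

/-- The sum of the `k`-th powers of the defects of `h` on the cones `outerCones n`. The first two
are the terms of degree one and two of the lattice point count of the polygon of `h`. -/
def defectPowSum (n k : ℕ) (h : ℤ × ℤ → ℤ) : ℤ := ((outerCones n).map fun c => defect h c ^ k).sum

/-- The covectors of the sides of the subdivision `outerCones n`. -/
def rays (n : ℕ) : List (ℤ × ℤ) :=
  [(0, -1), (1, 0), (0, 1), (-1, 0)] ++ (outerCones n).map fun c => c.1 + c.2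

/-- The lattice points of the polygon cut out by the inequalities of the covectors `rays n`. -/
def latticePolygon (n : ℕ) (h : ℤ × ℤ → ℤ) : Set (ℤ × ℤ) := {m | ∀ w ∈ rays n, dot w m ≤ h w}

section LatticePolygon

variable {h : ℤ × ℤ → ℤ} (hh : IsSupportFun h)
include hh

lemma mem_Icc_iff_dot_le (m : ℤ × ℤ) : m ∈ Set.Icc 0 (h (1, 0), h (0, 1)) ↔
    dot (0, -1) m ≤ h (0, -1) ∧ dot (1, 0) m ≤ h (1, 0) ∧ dot (0, 1) m ≤ h (0, 1) ∧
      dot (-1, 0) m ≤ h (-1, 0) := by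
  simp only [Set.mem_Icc, Prod.le_def, dot, hh.eq_zero_of_nonpos (0, -1) (by decide),
    hh.eq_zero_of_nonpos (-1, 0) (by decide), Prod.fst_zero, Prod.snd_zero]
  omega

lemma latticePolygon_eq_sdiff (n : ℕ) : latticePolygon n h =
    Set.Icc 0 (h (1, 0), h (0, 1)) \
      (cutOff h n (0, -1) (1, 0) ∪ (cutOff h n (1, 0) (0, 1) ∪ cutOff h n (0, 1) (-1, 0))) := by
  ext m
  simp only [Set.mem_sdiff, mem_Icc_iff_dot_le hh, latticePolygon, rays, outerCones, cutOff,
    Set.mem_ofPred_eq, Set.mem_union, List.map_append, List.mem_append, List.mem_cons,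
    List.mem_map, List.not_mem_nil]
  grind

lemma cutOff_subset_Icc (n : ℕ) :
    cutOff h n (0, -1) (1, 0) ∪ (cutOff h n (1, 0) (0, 1) ∪ cutOff h n (0, 1) (-1, 0)) ⊆
      Set.Icc 0 (h (1, 0), h (0, 1)) := by
  rintro m (hm | hm | hm) <;>
  · have hneg := dot_neg_le_of_mem_cutOff hh hm
    obtain ⟨hu, hv, -⟩ := hm
    simp only [Prod.neg_mk, neg_zero, neg_neg] at hneg
    rw [mem_Icc_iff_dot_le hh]
    tauto

lemma ncard_Icc_eq :
    ((Set.Icc 0 (h (1, 0), h (0, 1))).ncard : ℤ) = (h (1, 0) + 1) * (h (0, 1) + 1) := by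
  have h₁ := hh.nonneg (1, 0)
  have h₂ := hh.nonneg (0, 1)
  rw [← Finset.coe_Icc, Set.ncard_coe_finset, ← Prod.mk_zero_zero, ← Finset.Icc_product_Icc,
    Finset.card_product, Nat.cast_mul, Int.card_Icc, Int.card_Icc]
  simp only [sub_zero]
  rw [Int.toNat_of_nonneg (by omega), Int.toNat_of_nonneg (by omega)]

lemma finite_latticePolygon (n : ℕ) : (latticePolygon n h).Finite :=
  latticePolygon_eq_sdiff hh n ▸ (Set.finite_Icc _ _).sdiff

-- The bounding rectangle loses one lattice triangle for every cone of the subdivision.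
lemma two_mul_ncard_latticePolygon (n : ℕ) : 2 * ((latticePolygon n h).ncard : ℤ) =
    2 * ((h (1, 0) + 1) * (h (0, 1) + 1)) - (defectPowSum n 2 h + defectPowSum n 1 h) := by
  obtain ⟨f₁, c₁⟩ := two_mul_ncard_cutOff hh n (u := (0, -1)) (v := (1, 0)) (by simp)
  obtain ⟨f₂, c₂⟩ := two_mul_ncard_cutOff hh n (u := (1, 0)) (v := (0, 1)) (by simp)
  obtain ⟨f₃, c₃⟩ := two_mul_ncard_cutOff hh n (u := (0, 1)) (v := (-1, 0)) (by simp)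
  have d₁₂ := disjoint_cutOff_of_add_eq_smul hh n (u := (0, -1)) (v := (1, 0)) (w := (0, 1))
    le_rfl (by simp)
  have d₂₃ := disjoint_cutOff_of_add_eq_smul hh n (u := (1, 0)) (v := (0, 1)) (w := (-1, 0))
    le_rfl (by simp)
  have d₁₃ := disjoint_cutOff_neg hh n (0, -1) (1, 0)
  simp only [Prod.neg_mk, neg_zero, neg_neg] at d₁₃
  have hsub := Set.ncard_sdiff_add_ncard_of_subset (cutOff_subset_Icc hh n) (Set.finite_Icc _ _)
  rw [← latticePolygon_eq_sdiff hh, Set.ncard_union_eq (d₁₂.union_right d₁₃) f₁ (f₂.union f₃),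
    Set.ncard_union_eq d₂₃ f₂ f₃] at hsub
  have hIcc := ncard_Icc_eq hh
  rw [← hsub] at hIcc
  have hsum : defectPowSum n 2 h + defectPowSum n 1 h =
      ((outerCones n).map fun c => defect h c * (defect h c + 1)).sum := by
    rw [defectPowSum, defectPowSum, ← List.sum_map_add]
    congr 2 with c
    ring
  rw [hsum, outerCones, List.map_append, List.map_append, List.sum_append, List.sum_append]
  push_cast at hIcc
  linarith

end LatticePolygon

/-! ### Lattice point counts and areas -/

/-- The lattice point `m` as a point of the real plane. -/
def toPlane (m : ℤ × ℤ) : ℝ × ℝ := (m.1, m.2)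

lemma dot_toPlane (u v : ℤ × ℤ) : dot (toPlane u) (toPlane v) = ((dot u v : ℤ) : ℝ) := by
  simp [dot, toPlane]

lemma toPlane_injective : Function.Injective toPlane := fun u v huv => by
  simpa [toPlane, Prod.ext_iff] using huv

lemma mem_span_basisFun_iff {ι : Type*} [Finite ι] (y : ι → ℝ) :
    y ∈ Submodule.span ℤ (Set.range (Pi.basisFun ℝ ι)) ↔ ∀ i, ∃ k : ℤ, (k : ℝ) = y i := by
  have := Fintype.ofFinite ι
  simp [Module.Basis.mem_span_iff_repr_mem]

lemma card_preimage_finTwoArrow_inter (S : Set (ℝ × ℝ)) {N : ℕ} (hN : N ≠ 0) :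
    Nat.card ↑((MeasurableEquiv.finTwoArrow : (Fin 2 → ℝ) ≃ᵐ ℝ × ℝ) ⁻¹' S ∩ (N : ℝ)⁻¹ •
      (Submodule.span ℤ (Set.range (Pi.basisFun ℝ (Fin 2))) : Set (Fin 2 → ℝ))) =
      {m : ℤ × ℤ | (N : ℝ)⁻¹ • toPlane m ∈ S}.ncard := by
  let e : (Fin 2 → ℝ) ≃ᵐ ℝ × ℝ := MeasurableEquiv.finTwoArrow
  have hinj : Function.Injective fun m => e.symm ((N : ℝ)⁻¹ • toPlane m) :=
    e.symm.injective.comp ((smul_right_injective _ (by simpa)).comp toPlane_injective)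
  rw [Nat.card_coe_set_eq, ← Set.ncard_image_of_injective _ hinj]
  congr 1
  ext z
  simp only [Set.mem_inter_iff, Set.mem_preimage, Set.mem_smul_set, SetLike.mem_coe,
    mem_span_basisFun_iff, Set.mem_image, Set.mem_ofPred_eq]
  constructor
  · rintro ⟨hz, y, hy, rfl⟩
    obtain ⟨a, ha⟩ := hy 0
    obtain ⟨b, hb⟩ := hy 1
    have hab : (N : ℝ)⁻¹ • toPlane (a, b) = e ((N : ℝ)⁻¹ • y) := by
      simp [e, MeasurableEquiv.finTwoArrow, toPlane, ha, hb]
    exact ⟨(a, b), hab ▸ hz, by rw [hab, e.symm_apply_apply]⟩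
  · rintro ⟨m, hm, rfl⟩
    refine ⟨(e.apply_symm_apply _).symm ▸ hm, ![(m.1 : ℝ), m.2], ?_, ?_⟩
    · simp [Fin.forall_fin_two]
    · ext i
      fin_cases i <;> simp [e, MeasurableEquiv.finTwoArrow, toPlane]

lemma tendsto_ncard_div_sq {S : Set (ℝ × ℝ)} (hb : Bornology.IsBounded S) (hS : IsClosed S)
    (hc : Convex ℝ S) :
    Filter.Tendsto (fun N : ℕ => ({m : ℤ × ℤ | (N : ℝ)⁻¹ • toPlane m ∈ S}.ncard : ℝ) / N ^ 2)
      Filter.atTop (nhds (area S)) := by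
  let e := ContinuousLinearEquiv.finTwoArrow ℝ ℝ
  have hcomp : IsCompact (e ⁻¹' S) :=
    e.toHomeomorph.isCompact_preimage.2 (Metric.isCompact_of_isClosed_isBounded hS hb)
  have hlim := tendsto_card_div_pow_atTop_volume (e ⁻¹' S) hcomp.isBounded
    hcomp.isClosed.measurableSet ((hc.linear_preimage e.toLinearMap).addHaar_frontier volume)
  have hvol : volume.real (e ⁻¹' S) = area S := congrArg ENNReal.toReal <|
    (volume_preserving_finTwoArrow ℝ).measure_preimage_equiv S
  rw [hvol, Fintype.card_fin] at hlim
  refine hlim.congr' ?_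
  filter_upwards [Filter.eventually_ne_atTop 0] with N hN
  rw [← card_preimage_finTwoArrow_inter S hN]
  rfl

/-- The polygon cut out by the inequalities of the covectors `rays n`. -/
def polygon (n : ℕ) (h : ℤ × ℤ → ℤ) : Set (ℝ × ℝ) :=
  {z | ∀ w ∈ rays n, dot (toPlane w) z ≤ h w}

lemma polygon_eq_iInter (n : ℕ) (h : ℤ × ℤ → ℤ) :
    polygon n h = ⋂ w ∈ rays n, {z | dot (toPlane w) z ≤ h w} := by
  ext; simp [polygon]

lemma isClosed_polygon (n : ℕ) (h : ℤ × ℤ → ℤ) : IsClosed (polygon n h) := by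
  rw [polygon_eq_iInter]
  refine isClosed_biInter fun w _ => isClosed_le ?_ continuous_const
  unfold dot
  fun_prop

lemma isLinearMap_dot (w : ℝ × ℝ) : IsLinearMap ℝ (dot w) :=
  ⟨dot_add_right w, fun c => dot_smul_right c w⟩

lemma convex_polygon (n : ℕ) (h : ℤ × ℤ → ℤ) : Convex ℝ (polygon n h) := by
  rw [polygon_eq_iInter]
  exact convex_iInter₂ fun w _ => convex_halfSpace_le (isLinearMap_dot _) _

section Area

variable {h a b c : ℤ × ℤ → ℤ}

lemma IsSupportFun.isBounded_polygon (hh : IsSupportFun h) (n : ℕ) :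
    Bornology.IsBounded (polygon n h) := by
  refine (Metric.isBounded_Icc (0 : ℝ × ℝ) (h (1, 0), h (0, 1))).subset fun z hz => ?_
  have h₁ := hz (0, -1) (by simp [rays])
  have h₂ := hz (1, 0) (by simp [rays])
  have h₃ := hz (0, 1) (by simp [rays])
  have h₄ := hz (-1, 0) (by simp [rays])
  rw [hh.eq_zero_of_nonpos _ (by decide)] at h₁ h₄
  simp only [dot, toPlane, Int.cast_zero, Int.cast_one, Int.cast_neg] at h₁ h₂ h₃ h₄
  simp only [Set.mem_Icc, Prod.le_def, Prod.fst_zero, Prod.snd_zero]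
  exact ⟨⟨by linarith, by linarith⟩, by linarith, by linarith⟩

lemma setOf_inv_smul_mem_polygon (n : ℕ) (h : ℤ × ℤ → ℤ) {N : ℕ} (hN : N ≠ 0) :
    {m : ℤ × ℤ | (N : ℝ)⁻¹ • toPlane m ∈ polygon n h} = latticePolygon n (N • h) := by
  have hN' : (0 : ℝ) < N := by positivity
  ext m
  refine forall₂_congr fun w _ => ?_
  rw [dot_smul_right, dot_toPlane, inv_mul_le_iff₀ hN', Pi.smul_apply, nsmul_eq_mul]
  exact_mod_cast Iff.rfl

lemma defectPowSum_nsmul (n k N : ℕ) (h : ℤ × ℤ → ℤ) :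
    defectPowSum n k (N • h) = (N : ℤ) ^ k * defectPowSum n k h := by
  rw [defectPowSum, defectPowSum, ← List.sum_map_mul_left]
  congr 2 with c
  rw [← mul_pow]
  simp only [defect, Pi.smul_apply, nsmul_eq_mul]
  ring

lemma IsSupportFun.two_mul_area_polygon (hh : IsSupportFun h) (n : ℕ) :
    2 * area (polygon n h) = 2 * (h (1, 0) * h (0, 1)) - defectPowSum n 2 h := by
  set A : ℝ := ((h (1, 0) : ℤ) : ℝ)
  set B : ℝ := ((h (0, 1) : ℤ) : ℝ)
  set K₁ : ℤ := defectPowSum n 1 h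
  set K₂ : ℤ := defectPowSum n 2 h
  have hcount (N : ℕ) : 2 * ((latticePolygon n (N • h)).ncard : ℝ) =
      2 * ((N * A + 1) * (N * B + 1)) - (N ^ 2 * K₂ + N * K₁) := by
    have hcard := two_mul_ncard_latticePolygon (hh.nsmul N) n
    rw [defectPowSum_nsmul, defectPowSum_nsmul, pow_one] at hcard
    simpa [A, B] using congrArg (Int.cast : ℤ → ℝ) hcard
  have hinv : Filter.Tendsto (fun N : ℕ => (N : ℝ)⁻¹) Filter.atTop (nhds 0) :=
    tendsto_inv_atTop_nhds_zero_nat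
  have hlim : Filter.Tendsto
      (fun N : ℕ => 2 * ((A + (N : ℝ)⁻¹) * (B + (N : ℝ)⁻¹)) - (K₂ + (N : ℝ)⁻¹ * K₁))
      Filter.atTop (nhds (2 * ((A + 0) * (B + 0)) - (K₂ + 0 * K₁))) :=
    (((hinv.const_add _).mul (hinv.const_add _)).const_mul 2).sub
      ((hinv.mul_const _).const_add _)
  simp only [add_zero, zero_mul] at hlim
  refine tendsto_nhds_unique ((tendsto_ncard_div_sq (hh.isBounded_polygon n) (isClosed_polygon n h)
    (convex_polygon n h)).const_mul 2) (hlim.congr' ?_)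
  filter_upwards [Filter.eventually_ne_atTop 0] with N hN
  have hN' : (N : ℝ) ≠ 0 := mod_cast hN
  rw [setOf_inv_smul_mem_polygon n h hN, ← mul_div_assoc, hcount]
  field_simp

-- Both sides are quadratic in the support functions, and the count differs from the area by terms
-- of lower degree only, which the second difference kills.
theorem ncard_latticePolygon_add_add (ha : IsSupportFun a) (hb : IsSupportFun b)
    (hc : IsSupportFun c) (n : ℕ) :
    ((latticePolygon n (c + a + b)).ncard : ℝ) + (latticePolygon n c).ncard =
      (latticePolygon n (c + a)).ncard + (latticePolygon n (c + b)).ncard +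
        (area (polygon n (a + b)) - area (polygon n a) - area (polygon n b)) := by
  have hdefect : defectPowSum n 2 (c + a + b) + defectPowSum n 1 (c + a + b) +
      (defectPowSum n 2 c + defectPowSum n 1 c) + defectPowSum n 2 a + defectPowSum n 2 b =
      defectPowSum n 2 (c + a) + defectPowSum n 1 (c + a) +
      (defectPowSum n 2 (c + b) + defectPowSum n 1 (c + b)) + defectPowSum n 2 (a + b) := by
    simp only [defectPowSum, ← List.sum_map_add]
    congr 2 with p
    simp only [defect, Pi.add_apply]
    ring
  have h₁ := two_mul_ncard_latticePolygon ((hc.add ha).add hb) n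
  have h₂ := two_mul_ncard_latticePolygon hc n
  have h₃ := two_mul_ncard_latticePolygon (hc.add ha) n
  have h₄ := two_mul_ncard_latticePolygon (hc.add hb) n
  have h₅ := (ha.add hb).two_mul_area_polygon n
  have h₆ := ha.two_mul_area_polygon n
  have h₇ := hb.two_mul_area_polygon n
  simp only [Pi.add_apply] at h₁ h₂ h₃ h₄ h₅
  rify at h₁ h₂ h₃ h₄ hdefect
  push_cast at h₅
  linarith

end Area

/-! ### Newton polygons as intersections of finitely many half-planes -/

/-- `T` has diameter at most `n` in the `ℓ¹` metric, so that the covectors normal to the segments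
between points of `T` are multiples of covectors in `rays n`. -/
def DiamLE (T : Finset (ℤ × ℤ)) (n : ℕ) : Prop :=
  ∀ β ∈ T, ∀ β' ∈ T, |(β - β').1| + |(β - β').2| ≤ n

lemma DiamLE.mono {T : Finset (ℤ × ℤ)} {m n : ℕ} (hT : DiamLE T m) (hmn : m ≤ n) : DiamLE T n :=
  fun β hβ β' hβ' => (hT β hβ β' hβ').trans (mod_cast hmn)

lemma exists_diamLE (T : Finset (ℤ × ℤ)) : ∃ n, DiamLE T n := by
  refine ⟨∑ p ∈ T ×ˢ T, (|(p.1 - p.2).1| + |(p.1 - p.2).2|).toNat, fun β hβ β' hβ' => ?_⟩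
  have hle := Finset.single_le_sum (s := T ×ˢ T) (a := (β, β'))
    (f := fun p => (|(p.1 - p.2).1| + |(p.1 - p.2).2|).toNat) (fun _ _ => Nat.zero_le _)
    (Finset.mk_mem_product hβ hβ')
  exact (Int.self_le_toNat _).trans (mod_cast hle)

lemma mem_rays_of_isCoprime {n : ℕ} {w : ℤ × ℤ} (hw : IsCoprime w.1 w.2)
    (hn : |w.1| + |w.2| ≤ n) (hpos : 0 < w.1 ∨ 0 < w.2) : w ∈ rays n := by
  obtain ⟨p, q⟩ := w
  dsimp only at hw hn hpos
  have hmem {u v : ℤ × ℤ} {x y : ℤ} (hx : 0 < x) (hy : 0 < y) (hxy : IsCoprime x y)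
      (hxn : x + y ≤ n) (hsub : sternBrocotCones n u v ⊆ outerCones n)
      (he : x • u + y • v = (p, q)) : (p, q) ∈ rays n := by
    obtain ⟨c, hc, e⟩ := exists_mem_cones_of_isCoprime n u v hx hy hxy hxn
    exact List.mem_append_right _ (List.mem_map.2 ⟨c, hsub hc, e.trans he⟩)
  rcases lt_trichotomy p 0 with hp | rfl | hp
  · have hq : 0 < q := by omega
    rw [abs_of_neg hp, abs_of_pos hq] at hn
    exact hmem (u := (0, 1)) (v := (-1, 0)) hq (neg_pos.2 hp) hw.symm.neg_right (by omega)
      (by simp [outerCones]) (by simp)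
  · obtain rfl : q = 1 := by
      have := Int.isUnit_iff.1 (isCoprime_zero_left.1 hw)
      omega
    simp [rays]
  · rcases lt_trichotomy q 0 with hq | rfl | hq
    · rw [abs_of_pos hp, abs_of_neg hq] at hn
      exact hmem (u := (0, -1)) (v := (1, 0)) (neg_pos.2 hq) hp hw.symm.neg_left (by omega)
        (by simp [outerCones]) (by simp)
    · obtain rfl : p = 1 := by
        have := Int.isUnit_iff.1 (isCoprime_zero_right.1 hw)
        omega
      simp [rays]
    · rw [abs_of_pos hp, abs_of_pos hq] at hn
      exact hmem (u := (1, 0)) (v := (0, 1)) hp hq hw hn (by simp [outerCones]) (by simp)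

section Rays

variable {R : Type*} [CommRing R]

lemma exists_primitive_orthogonal [IsDomain R] [CharZero R] {δ : ℤ × ℤ} (hδ : δ ≠ 0) :
    ∃ r : ℤ × ℤ, IsCoprime r.1 r.2 ∧ |r.1| + |r.2| ≤ |δ.1| + |δ.2| ∧
      ∀ s : R × R, dot s (δ.1, δ.2) = 0 → ∃ c : R, s = c • ((r.1 : R), (r.2 : R)) := by
  obtain ⟨a, b⟩ := δ
  have hg : 0 < Int.gcd a b := Int.gcd_pos_iff.2 (by simpa [← not_and_or] using hδ)
  obtain ⟨a', b', hab', ha, hb⟩ := Int.exists_gcd_one hg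
  generalize Int.gcd a b = g at hg ha hb
  subst ha hb
  obtain ⟨x, y, hxy⟩ := Int.isCoprime_iff_gcd_eq_one.2 hab'
  have hle (z : ℤ) : |z| ≤ |z * g| := by
    rw [abs_mul]
    exact le_mul_of_one_le_right (abs_nonneg _) (by rw [Nat.abs_cast]; exact_mod_cast hg)
  refine ⟨(b', -a'), ⟨y, -x, by linear_combination hxy⟩, ?_, fun s hs => ⟨y * s.1 - x * s.2, ?_⟩⟩
  · rw [abs_neg, add_comm]
    exact add_le_add (hle a') (hle b')
  · have hs' : s.1 * a' + s.2 * b' = 0 := by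
      refine (mul_eq_zero.1 ?_).resolve_left (Nat.cast_ne_zero (R := R).2 hg.ne')
      simp only [dot] at hs
      push_cast at hs
      linear_combination hs
    have hxy' : (x : R) * a' + y * b' = 1 := mod_cast hxy
    ext <;> simp only [Prod.smul_mk, smul_eq_mul, Int.cast_neg]
    · linear_combination x * hs' - s.1 * hxy'
    · linear_combination y * hs' - s.2 * hxy'

lemma exists_pos_smul_ray [LinearOrder R] [IsStrictOrderedRing R] {n : ℕ} {s : R × R} {δ : ℤ × ℤ}
    (hδ : δ ≠ 0) (hn : |δ.1| + |δ.2| ≤ n) (h : dot s (δ.1, δ.2) = 0) (hs : 0 < s.1 ∨ 0 < s.2) :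
    ∃ y : R, 0 < y ∧ ∃ w ∈ rays n, s = y • ((w.1 : R), (w.2 : R)) := by
  obtain ⟨r, hr, hrn, hrs⟩ := exists_primitive_orthogonal (R := R) hδ
  obtain ⟨c, rfl⟩ := hrs s h
  simp only [Prod.smul_fst, Prod.smul_snd, smul_eq_mul] at hs
  rcases lt_trichotomy c 0 with hc | rfl | hc
  · refine ⟨-c, neg_pos.2 hc, -r, mem_rays_of_isCoprime hr.neg_neg (by simpa using hrn.trans hn) ?_,
      by simp⟩
    have hpos {a : ℤ} (ha : 0 < c * (a : R)) : 0 < -a :=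
      neg_pos.2 (Int.cast_lt_zero.1 (neg_of_mul_pos_right ha hc.le))
    exact hs.imp hpos hpos
  · simp at hs
  · exact ⟨c, hc, r, mem_rays_of_isCoprime hr (hrn.trans hn) (by simpa [hc] using hs), rfl⟩

end Rays

-- `β'` is the first vertex reached when the covector turns from `A` towards `A'`.
lemma forall_le_or_exists_edge {α K : Type*} [Field K] [LinearOrder K] [IsStrictOrderedRing K]
    {T : Finset α} {A A' : α → K} {β : α} (hmax : ∀ γ ∈ T, A γ ≤ A β)
    (hlex : ∀ γ ∈ T, A' β < A' γ → A γ < A β) :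
    (∀ γ ∈ T, A' γ ≤ A' β) ∨ ∃ β' ∈ T, A' β < A' β' ∧ A β' < A β ∧
      ∀ γ ∈ T, (A' β' - A' β) * A γ + (A β - A β') * A' γ ≤
        (A' β' - A' β) * A β + (A β - A β') * A' β := by
  rw [or_iff_not_imp_left]
  push Not
  rintro ⟨γ₀, hγ₀, hlt₀⟩
  obtain ⟨β', hβ', hmin⟩ := (T.filter fun γ => A' β < A' γ).exists_min_image
    (fun γ => (A β - A γ) / (A' γ - A' β)) ⟨γ₀, Finset.mem_filter.2 ⟨hγ₀, hlt₀⟩⟩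
  simp only [Finset.mem_filter] at hβ' hmin
  have hx : 0 < A' β' - A' β := sub_pos.2 hβ'.2
  have hz : 0 < A β - A β' := sub_pos.2 (hlex β' hβ'.1 hβ'.2)
  refine ⟨β', hβ'.1, hβ'.2, sub_pos.1 hz, fun γ hγ => ?_⟩
  rcases lt_or_ge (A' β) (A' γ) with hlt | hle
  · have hratio := hmin γ ⟨hγ, hlt⟩
    rw [div_le_div_iff₀ hx (sub_pos.2 hlt)] at hratio
    linear_combination hratio
  · exact add_le_add (mul_le_mul_of_nonneg_left (hmax γ hγ) hx.le)
      (mul_le_mul_of_nonneg_left hle hz.le)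

/-- The support function of a finite set of lattice points containing the origin. -/
def supportFun (T : Finset (ℤ × ℤ)) (h0 : 0 ∈ T) (w : ℤ × ℤ) : ℤ := T.sup' ⟨0, h0⟩ (dot w)

section SupportFun

variable {T : Finset (ℤ × ℤ)} {h0 : 0 ∈ T}

lemma dot_le_supportFun {w m : ℤ × ℤ} (hm : m ∈ T) : dot w m ≤ supportFun T h0 w :=
  Finset.le_sup' (dot w) hm

lemma supportFun_le {w : ℤ × ℤ} {d : ℤ} (hd : ∀ m ∈ T, dot w m ≤ d) : supportFun T h0 w ≤ d :=
  Finset.sup'_le _ _ hd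

lemma exists_supportFun_eq (w : ℤ × ℤ) : ∃ m ∈ T, supportFun T h0 w = dot w m :=
  Finset.exists_mem_eq_sup' _ _

lemma supportFun_eq_dot {w m : ℤ × ℤ} (hm : m ∈ T) (hmax : ∀ γ ∈ T, dot w γ ≤ dot w m) :
    supportFun T h0 w = dot w m :=
  le_antisymm (supportFun_le hmax) (dot_le_supportFun hm)

lemma isSupportFun_supportFun (hT : ∀ m ∈ T, 0 ≤ m) : IsSupportFun (supportFun T h0) where
  eq_zero_of_nonpos w hw := (supportFun_eq_dot h0 fun m hm => by
    have h₁ := mul_nonneg (neg_nonneg.2 hw.1) (hT m hm).1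
    have h₂ := mul_nonneg (neg_nonneg.2 hw.2) (hT m hm).2
    rw [dot_zero_right, dot]
    linarith).trans (dot_zero_right w)
  exists_dot_eq w :=
    let ⟨m, hm, e⟩ := exists_supportFun_eq (h0 := h0) w
    ⟨m, e.symm, fun _ => dot_le_supportFun hm⟩

end SupportFun

section ConvexHull

variable {T : Finset (ℤ × ℤ)} {h0 : 0 ∈ T} {n : ℕ} {z : ℝ × ℝ}

lemma exists_dot_le_of_mem_rays (hz : z ∈ polygon n (supportFun T h0)) {y : ℝ} (hy : 0 ≤ y)
    {w : ℤ × ℤ} (hw : w ∈ rays n) :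
    ∃ γ ∈ T, dot (y • toPlane w) z ≤ dot (y • toPlane w) (toPlane γ) := by
  obtain ⟨γ, hγ, e⟩ := exists_supportFun_eq (h0 := h0) w
  refine ⟨γ, hγ, ?_⟩
  rw [dot_smul_left, dot_smul_left, dot_toPlane, ← e]
  exact mul_le_mul_of_nonneg_left (hz w hw) hy

variable (hT : ∀ m ∈ T, 0 ≤ m)
include hT

lemma nonneg_of_mem_polygon (hz : z ∈ polygon n (supportFun T h0)) : 0 ≤ z := by
  have h₁ := hz (-1, 0) (by simp [rays])
  have h₂ := hz (0, -1) (by simp [rays])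
  rw [(isSupportFun_supportFun hT).eq_zero_of_nonpos _ (by decide)] at h₁ h₂
  simpa [dot, toPlane, Prod.le_def] using And.intro h₁ h₂

lemma exists_dot_le_of_nonpos (hz : z ∈ polygon n (supportFun T h0)) {s : ℝ × ℝ} (hs : s ≤ 0) :
    ∃ γ ∈ T, dot s z ≤ dot s (toPlane γ) := by
  obtain ⟨hz₁, hz₂⟩ := nonneg_of_mem_polygon hT hz
  refine ⟨0, h0, ?_⟩
  simpa [dot, toPlane] using
    add_nonpos (mul_nonpos_of_nonpos_of_nonneg hs.1 hz₁) (mul_nonpos_of_nonpos_of_nonneg hs.2 hz₂)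

lemma exists_dot_le_fst (hz : z ∈ polygon n (supportFun T h0)) (x : ℝ) :
    ∃ γ ∈ T, dot (x, 0) z ≤ dot (x, 0) (toPlane γ) := by
  rcases le_total 0 x with hx | hx
  · simpa [toPlane] using exists_dot_le_of_mem_rays hz hx (w := (1, 0)) (by simp [rays])
  · exact exists_dot_le_of_nonpos hT hz ⟨hx, le_rfl⟩

lemma exists_dot_le_snd (hz : z ∈ polygon n (supportFun T h0)) (y : ℝ) :
    ∃ γ ∈ T, dot (0, y) z ≤ dot (0, y) (toPlane γ) := by
  rcases le_total 0 y with hy | hy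
  · simpa [toPlane] using exists_dot_le_of_mem_rays hz hy (w := (0, 1)) (by simp [rays])
  · exact exists_dot_le_of_nonpos hT hz ⟨le_rfl, hy⟩

lemma exists_dot_le_of_dot_eq (hn : DiamLE T n) (hz : z ∈ polygon n (supportFun T h0))
    {s : ℝ × ℝ} {β β' : ℤ × ℤ} (hβ : β ∈ T) (hβ' : β' ∈ T) (hne : β ≠ β')
    (hs : dot s (toPlane β) = dot s (toPlane β')) :
    ∃ γ ∈ T, dot s z ≤ dot s (toPlane γ) := by
  by_cases hpos : 0 < s.1 ∨ 0 < s.2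
  · obtain ⟨y, hy, w, hw, rfl⟩ := exists_pos_smul_ray (sub_ne_zero.2 hne) (hn β hβ β' hβ')
      (by simp only [dot, toPlane, Prod.fst_sub, Prod.snd_sub, Int.cast_sub] at hs ⊢
          linear_combination hs) hpos
    exact exists_dot_le_of_mem_rays hz hy.le hw
  · exact exists_dot_le_of_nonpos hT hz (nonpos_of_not_pos hpos)

-- If `ω` separated `z` from `T` then, turning `ω` towards either of its two components, the first
-- edge met would bound `z` by the same vertex `β`, and so would their sum `ω`.
lemma exists_dot_le (hn : DiamLE T n) (hz : z ∈ polygon n (supportFun T h0)) (ω : ℝ × ℝ) :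
    ∃ γ ∈ T, dot ω z ≤ dot ω (toPlane γ) := by
  by_contra! hsep
  obtain ⟨β, hβ, hmax⟩ := T.exists_max_image (fun γ => dot ω (toPlane γ)) ⟨0, h0⟩
  have huniq : ∀ γ ∈ T, γ ≠ β → dot ω (toPlane γ) < dot ω (toPlane β) := by
    refine fun γ hγ hne => (hmax γ hγ).lt_of_ne fun he => ?_
    obtain ⟨μ, hμ, hle⟩ := exists_dot_le_of_dot_eq hT hn hz hγ hβ hne he
    exact (hsep μ hμ).not_ge hle
  have hturn (e : ℝ × ℝ) (he : ∃ γ ∈ T, dot e z ≤ dot e (toPlane γ)) :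
      dot e z ≤ dot e (toPlane β) := by
    rcases forall_le_or_exists_edge (A' := fun γ => dot e (toPlane γ)) hmax
        fun γ hγ hlt => huniq γ hγ (by rintro rfl; exact lt_irrefl _ hlt) with
      hall | ⟨β', hβ', hx, ht, hedge⟩
    · obtain ⟨γ, hγ, hle⟩ := he
      exact hle.trans (hall γ hγ)
    · set x := dot e (toPlane β') - dot e (toPlane β) with hx'
      set t := dot ω (toPlane β) - dot ω (toPlane β') with ht'
      obtain ⟨γ, hγ, hle⟩ := exists_dot_le_of_dot_eq hT hn hz (s := x • ω + t • e) hβ hβ'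
        (by rintro rfl; exact lt_irrefl _ hx)
        (by simp only [dot_add_left, dot_smul_left]; linear_combination x * ht' - t * hx')
      have hγ' := hedge γ hγ
      simp only [dot_add_left, dot_smul_left] at hle
      have hωz := mul_lt_mul_of_pos_left (hsep β hβ) (sub_pos.2 hx)
      exact le_of_mul_le_mul_left (by linarith) (sub_pos.2 ht)
  have h₁ := hturn (ω.1, 0) (exists_dot_le_fst hT hz ω.1)
  have h₂ := hturn (0, ω.2) (exists_dot_le_snd hT hz ω.2)
  have hβz := hsep β hβ
  simp only [dot, zero_mul, add_zero, zero_add] at h₁ h₂ hβz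
  linarith

lemma convexHull_eq_polygon (hn : DiamLE T n) :
    convexHull ℝ (toPlane '' (T : Set (ℤ × ℤ))) = polygon n (supportFun T h0) := by
  apply subset_antisymm
  · refine convexHull_min ?_ (convex_polygon n _)
    rintro _ ⟨m, hm, rfl⟩ w -
    rw [dot_toPlane]
    exact_mod_cast dot_le_supportFun hm
  · intro z hz
    by_contra hzn
    obtain ⟨φ, u, hu, hu'⟩ := geometric_hahn_banach_closed_point (convex_convexHull ℝ _)
      ((T.finite_toSet.image toPlane).isClosed_convexHull ℝ) hzn
    have hφ (y : ℝ × ℝ) : φ y = dot (φ (1, 0), φ (0, 1)) y := by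
      have hy : y = y.1 • ((1 : ℝ), (0 : ℝ)) + y.2 • ((0 : ℝ), (1 : ℝ)) := by ext <;> simp
      conv_lhs => rw [hy, map_add, map_smul, map_smul]
      simp only [dot, smul_eq_mul, mul_comm]
    obtain ⟨γ, hγ, hle⟩ := exists_dot_le hT hn hz (φ (1, 0), φ (0, 1))
    rw [← hφ, ← hφ] at hle
    exact (((hu _ (subset_convexHull ℝ _ ⟨γ, hγ, rfl⟩)).trans hu').not_ge hle)

end ConvexHull

/-! ### Weights of monomials -/

/-- The exponent vector of a monomial in two variables, as a lattice point. -/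
def toLattice (m : Fin 2 →₀ ℕ) : ℤ × ℤ := (m 0, m 1)

lemma toLattice_add (m m' : Fin 2 →₀ ℕ) : toLattice (m + m') = toLattice m + toLattice m' := by
  simp [toLattice]

lemma toLattice_injective : Function.Injective toLattice := fun m m' h => by
  simp only [toLattice, Prod.mk.injEq, Nat.cast_inj] at h
  exact Finsupp.ext (Fin.forall_fin_two.2 h)

lemma toLattice_nonneg (m : Fin 2 →₀ ℕ) : 0 ≤ toLattice m :=
  ⟨Int.natCast_nonneg _, Int.natCast_nonneg _⟩

lemma exists_toLattice_eq {x : ℤ × ℤ} (hx : 0 ≤ x) : ∃ m, toLattice m = x :=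
  ⟨Finsupp.single 0 x.1.toNat + Finsupp.single 1 x.2.toNat, by
    ext
    · simpa [toLattice] using hx.1
    · simpa [toLattice] using hx.2⟩

lemma dot_nonpos {w m : ℤ × ℤ} (hw : w ≤ 0) (hm : 0 ≤ m) : dot w m ≤ 0 :=
  add_nonpos (mul_nonpos_of_nonpos_of_nonneg hw.1 hm.1) (mul_nonpos_of_nonpos_of_nonneg hw.2 hm.2)

section Weight

variable {R : Type*} [CommRing R] {w : ℤ × ℤ} {d e : ℤ} {p q : MvPolynomial (Fin 2) R}

/-- The polynomials all of whose monomials have `w`-weight at most `d`. -/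
def weightLE (w : ℤ × ℤ) (d : ℤ) : Submodule R (MvPolynomial (Fin 2) R) :=
  restrictSupport R {m | dot w (toLattice m) ≤ d}

lemma mem_weightLE : p ∈ weightLE w d ↔ ∀ m ∈ p.support, dot w (toLattice m) ≤ d :=
  mem_restrictSupport_iff R

lemma weightLE_mono (hde : d ≤ e) : weightLE (R := R) w d ≤ weightLE w e :=
  fun _ hp => mem_weightLE.2 fun m hm => (mem_weightLE.1 hp m hm).trans hde

lemma mul_mem_weightLE (hp : p ∈ weightLE w d) (hq : q ∈ weightLE w e) :
    p * q ∈ weightLE w (d + e) := by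
  classical
  refine mem_weightLE.2 fun m hm => ?_
  obtain ⟨i, hi, j, hj, rfl⟩ := Finset.mem_add.1 (support_mul p q hm)
  rw [toLattice_add, dot_add_right]
  exact add_le_add (mem_weightLE.1 hp i hi) (mem_weightLE.1 hq j hj)

/-- The sum of the terms of `w`-weight exactly `d`. -/
def weightPart (w : ℤ × ℤ) (d : ℤ) : MvPolynomial (Fin 2) R →ₗ[R] MvPolynomial (Fin 2) R :=
  weightedHomogeneousComponent ![w.1, w.2] d

lemma coeff_weightPart (w : ℤ × ℤ) (d : ℤ) (p : MvPolynomial (Fin 2) R) (m : Fin 2 →₀ ℕ) :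
    coeff m (weightPart w d p) = if dot w (toLattice m) = d then coeff m p else 0 := by
  classical
  have hweight : Finsupp.weight ![w.1, w.2] m = dot w (toLattice m) := by
    rw [Finsupp.weight_apply, Finsupp.sum_fintype _ _ (by simp)]
    simp [dot, toLattice, mul_comm]
  rw [weightPart, coeff_weightedHomogeneousComponent, hweight]

lemma mem_support_weightPart {m : Fin 2 →₀ ℕ} :
    m ∈ (weightPart w d p).support ↔ m ∈ p.support ∧ dot w (toLattice m) = d := by
  rw [mem_support_iff, coeff_weightPart, ite_ne_right_iff, mem_support_iff, and_comm]

lemma weightPart_eq_zero (hp : p ∈ weightLE w e) (hed : e < d) : weightPart w d p = 0 := by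
  refine support_eq_empty.1 (Finset.eq_empty_of_forall_notMem fun m hm => ?_)
  obtain ⟨hmp, hmd⟩ := mem_support_weightPart.1 hm
  exact (mem_weightLE.1 hp m hmp).not_gt (hmd ▸ hed)

lemma weightPart_mem_weightLE : weightPart w d p ∈ weightLE w d :=
  mem_weightLE.2 fun _ hm => (mem_support_weightPart.1 hm).2.le

lemma sub_weightPart_mem_weightLE (hp : p ∈ weightLE w d) :
    p - weightPart w d p ∈ weightLE w (d - 1) := by
  refine mem_weightLE.2 fun m hm => ?_
  rw [mem_support_iff, coeff_sub, coeff_weightPart] at hm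
  by_cases hd : dot w (toLattice m) = d
  · simp [hd] at hm
  · have := mem_weightLE.1 hp m (mem_support_iff.2 (by simpa [hd] using hm))
    omega

lemma weightPart_mul (hp : p ∈ weightLE w d) (hq : q ∈ weightLE w e) :
    weightPart w (d + e) (p * q) = weightPart w d p * weightPart w e q := by
  have hlower : p * q - weightPart w d p * weightPart w e q ∈ weightLE w (d + e - 1) := by
    have hsplit : p * q - weightPart w d p * weightPart w e q =
        (p - weightPart w d p) * q + weightPart w d p * (q - weightPart w e q) := by ring
    have h₁ := mul_mem_weightLE (sub_weightPart_mem_weightLE hp) hq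
    have h₂ := mul_mem_weightLE (weightPart_mem_weightLE (w := w) (d := d) (p := p))
      (sub_weightPart_mem_weightLE hq)
    rw [hsplit]
    rw [sub_add_eq_add_sub] at h₁
    rw [← add_sub_assoc] at h₂
    exact add_mem h₁ h₂
  have hhom : weightPart w (d + e) (weightPart w d p * weightPart w e q) =
      weightPart w d p * weightPart w e q :=
    ((weightedHomogeneousComponent_isWeightedHomogeneous _ _).mul
      (weightedHomogeneousComponent_isWeightedHomogeneous _ _)).weightedHomogeneousComponent_same
  rw [← sub_eq_zero, ← weightPart_eq_zero hlower (sub_one_lt _), map_sub, hhom]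

lemma exists_weightPart_ne_zero (hp : p ≠ 0) (w : ℤ × ℤ) :
    ∃ d, p ∈ weightLE w d ∧ weightPart w d p ≠ 0 := by
  obtain ⟨m, hm, hmax⟩ := p.support.exists_max_image (fun m => dot w (toLattice m))
    (support_nonempty.2 hp)
  exact ⟨_, mem_weightLE.2 hmax, support_nonempty.1 ⟨m, mem_support_weightPart.2 ⟨hm, rfl⟩⟩⟩

lemma exists_dot_add_dot_le [IsDomain R] {m β : Fin 2 →₀ ℕ} (hm : m ∈ p.support)
    (hβ : β ∈ q.support) (w : ℤ × ℤ) :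
    ∃ μ ∈ (p * q).support,
      dot w (toLattice m) + dot w (toLattice β) ≤ dot w (toLattice μ) := by
  obtain ⟨d, hd, hpd⟩ := exists_weightPart_ne_zero (support_nonempty.1 ⟨m, hm⟩) w
  obtain ⟨e, he, hqe⟩ := exists_weightPart_ne_zero (support_nonempty.1 ⟨β, hβ⟩) w
  have hne := mul_ne_zero hpd hqe
  rw [← weightPart_mul hd he] at hne
  obtain ⟨μ, hμ⟩ := support_nonempty.2 hne
  obtain ⟨hμ, hμde⟩ := mem_support_weightPart.1 hμ
  exact ⟨μ, hμ, hμde ▸ add_le_add (mem_weightLE.1 hd m hm) (mem_weightLE.1 he β hβ)⟩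

end Weight

/-! ### Newton diagrams at infinity -/

/-- The lattice points spanning the Newton diagram at infinity of `f`. -/
def newtonPts (f : P2) : Finset (ℤ × ℤ) := insert 0 (f.support.image toLattice)

lemma zero_mem_newtonPts (f : P2) : 0 ∈ newtonPts f := Finset.mem_insert_self _ _

/-- The support function of the Newton diagram at infinity of `f`. -/
def newtonFun (f : P2) : ℤ × ℤ → ℤ := supportFun (newtonPts f) (zero_mem_newtonPts f)

section Newton

variable {f g : P2} {w : ℤ × ℤ}

lemma mem_newtonPts {x : ℤ × ℤ} : x ∈ newtonPts f ↔ x = 0 ∨ ∃ m ∈ f.support, toLattice m = x := by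
  rw [newtonPts, Finset.mem_insert, Finset.mem_image]

lemma toLattice_mem_newtonPts {m : Fin 2 →₀ ℕ} (hm : m ∈ f.support) : toLattice m ∈ newtonPts f :=
  mem_newtonPts.2 (Or.inr ⟨m, hm, rfl⟩)

lemma newtonPts_nonneg : ∀ m ∈ newtonPts f, 0 ≤ m := by
  intro m hm
  rcases mem_newtonPts.1 hm with rfl | ⟨m, -, rfl⟩
  exacts [le_rfl, toLattice_nonneg m]

lemma isSupportFun_newtonFun (f : P2) : IsSupportFun (newtonFun f) :=
  isSupportFun_supportFun newtonPts_nonneg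

lemma newton_eq_polygon {n : ℕ} (hn : DiamLE (newtonPts f) n) :
    newton f = polygon n (newtonFun f) := by
  rw [newtonFun, ← convexHull_eq_polygon newtonPts_nonneg hn, newton]
  congr 1
  ext p
  simp [newtonPts, toPlane, toLattice, eq_comm]

lemma mem_weightLE_newtonFun (f : P2) (w : ℤ × ℤ) : f ∈ weightLE w (newtonFun f w) :=
  mem_weightLE.2 fun _ hm => dot_le_supportFun (toLattice_mem_newtonPts hm)

-- The origin lies on a face of the diagram facing outwards only if it is itself an exponent.
lemma QuasiConvenient.exists_toLattice_eq_of_le (hf : QuasiConvenient f)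
    (hw : 0 < w.1 ∨ 0 < w.2) {β : ℤ × ℤ} (hβ : β ∈ newtonPts f) (hmax : newtonFun f w ≤ dot w β) :
    ∃ m ∈ f.support, toLattice m = β := by
  rcases mem_newtonPts.1 hβ with rfl | hβ
  · obtain ⟨⟨a, ha⟩, ⟨b, hb⟩⟩ := hf
    rw [dot_zero_right] at hmax
    have h₁ := (mem_weightLE.1 (mem_weightLE_newtonFun f w) _ (mem_support_iff.2 ha)).trans hmax
    have h₂ := (mem_weightLE.1 (mem_weightLE_newtonFun f w) _ (mem_support_iff.2 hb)).trans hmax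
    simp only [dot, toLattice, Finsupp.single_eq_same, ne_eq, zero_ne_one, one_ne_zero,
      not_false_eq_true, Finsupp.single_eq_of_ne, Nat.cast_zero, mul_zero, add_zero,
      zero_add] at h₁ h₂
    refine ⟨0, mem_support_iff.2 ?_, by simp [toLattice]⟩
    rcases hw with hw | hw
    · obtain rfl : a = 0 := by
        exact_mod_cast (nonpos_of_mul_nonpos_right h₁ hw).antisymm a.cast_nonneg
      simpa using ha
    · obtain rfl : b = 0 := by
        exact_mod_cast (nonpos_of_mul_nonpos_right h₂ hw).antisymm b.cast_nonneg
      simpa using hb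
  · exact hβ

lemma QuasiConvenient.exists_dot_eq_newtonFun (hf : QuasiConvenient f)
    (hw : 0 < w.1 ∨ 0 < w.2) : ∃ m ∈ f.support, dot w (toLattice m) = newtonFun f w := by
  obtain ⟨β, hβ, e⟩ := exists_supportFun_eq (h0 := zero_mem_newtonPts f) w
  obtain ⟨m, hm, rfl⟩ := hf.exists_toLattice_eq_of_le hw hβ e.le
  exact ⟨m, hm, e.symm⟩

lemma QuasiConvenient.ne_zero (hf : QuasiConvenient f) : f ≠ 0 := by
  rintro rfl
  obtain ⟨⟨a, ha⟩, -⟩ := hf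
  exact ha (coeff_zero _)

lemma newtonFun_mul (hf : QuasiConvenient f) (hg : QuasiConvenient g) :
    newtonFun (f * g) = newtonFun f + newtonFun g := by
  ext w
  have hf₀ := isSupportFun_newtonFun f
  have hg₀ := isSupportFun_newtonFun g
  by_cases hw : 0 < w.1 ∨ 0 < w.2
  · apply le_antisymm
    · refine supportFun_le fun β hβ => ?_
      rcases mem_newtonPts.1 hβ with rfl | ⟨m, hm, rfl⟩
      · exact (dot_zero_right w).trans_le ((hf₀.add hg₀).nonneg w)
      · exact mem_weightLE.1 (mul_mem_weightLE (mem_weightLE_newtonFun f w)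
          (mem_weightLE_newtonFun g w)) m hm
    · obtain ⟨m, hm, hmf⟩ := hf.exists_dot_eq_newtonFun hw
      obtain ⟨β, hβ, hβg⟩ := hg.exists_dot_eq_newtonFun hw
      obtain ⟨μ, hμ, hle⟩ := exists_dot_add_dot_le hm hβ w
      rw [Pi.add_apply, ← hmf, ← hβg]
      exact hle.trans (mem_weightLE.1 (mem_weightLE_newtonFun (f * g) w) μ hμ)
  · replace hw := nonpos_of_not_pos hw
    rw [(isSupportFun_newtonFun _).eq_zero_of_nonpos w hw, (hf₀.add hg₀).eq_zero_of_nonpos w hw]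

end Newton

/-! ### A polygon with prescribed edge directions -/

/-- The support function of the hull of the origin and the positive and negative parts of `δ`; the
edge joining these two parts has direction `δ`. -/
def edgeFun (δ : ℤ × ℤ) : ℤ × ℤ → ℤ := supportFun {0, δ⁺, δ⁻} (Finset.mem_insert_self _ _)

section EdgeFun

variable {δ w : ℤ × ℤ}

lemma isSupportFun_edgeFun (δ : ℤ × ℤ) : IsSupportFun (edgeFun δ) :=
  isSupportFun_supportFun <| by simp [posPart_nonneg, negPart_nonneg]

lemma dot_posPart_le_edgeFun : dot w δ⁺ ≤ edgeFun δ w := dot_le_supportFun (by simp)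

lemma dot_negPart_le_edgeFun : dot w δ⁻ ≤ edgeFun δ w := dot_le_supportFun (by simp)

lemma dot_eq_dot_posPart_sub (w δ : ℤ × ℤ) : dot w δ = dot w δ⁺ - dot w δ⁻ := by
  rw [eq_sub_iff_add_eq, ← dot_add_right, ← eq_sub_iff_add_eq.1 (posPart_sub_negPart δ).symm]

lemma le_zero_of_dot_posPart_neg {w' : ℤ × ℤ} (hpos : dot w δ⁺ < 0) (hneg : dot w δ⁻ ≤ 0)
    (hneg' : dot w' δ⁻ < 0) : w ≤ 0 := by
  obtain ⟨i, j⟩ := δ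
  obtain ⟨p, q⟩ := w
  change p * i⁺ + q * j⁺ < 0 at hpos
  change p * i⁻ + q * j⁻ ≤ 0 at hneg
  change _ * i⁻ + _ * j⁻ < 0 at hneg'
  rcases le_total 0 i with hi | hi <;> rcases le_total 0 j with hj | hj <;>
    simp only [posPart_of_nonneg, posPart_of_nonpos, negPart_of_nonneg, negPart_of_nonpos, hi, hj,
      mul_zero, zero_add, add_zero, lt_self_iff_false] at hpos hneg hneg'
  · have hj' : 0 < -j := (neg_nonneg.2 hj).lt_of_ne' (right_ne_zero_of_mul hneg'.ne)
    exact ⟨(neg_of_mul_neg_left hpos hi).le, nonpos_of_mul_nonpos_left hneg hj'⟩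
  · have hi' : 0 < -i := (neg_nonneg.2 hi).lt_of_ne' (right_ne_zero_of_mul hneg'.ne)
    exact ⟨nonpos_of_mul_nonpos_left hneg hi', (neg_of_mul_neg_left hpos hj).le⟩

lemma edgeFun_add_lt {w w' : ℤ × ℤ} {x z : ℤ} (hx : 0 < x) (hz : 0 < z) (hw : 0 < w.1 ∨ 0 < w.2)
    (horth : dot (x • w + z • w') δ = 0) (hneg : dot w δ < 0) (hpos : 0 < dot w' δ) :
    edgeFun δ (x • w + z • w') < x * edgeFun δ w + z * edgeFun δ w' := by
  have h₁ := dot_negPart_le_edgeFun (δ := δ) (w := w)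
  have h₂ := dot_posPart_le_edgeFun (δ := δ) (w := w')
  rw [dot_eq_dot_posPart_sub] at horth hneg hpos
  have hlt : dot (x • w + z • w') δ⁻ < x * edgeFun δ w + z * edgeFun δ w' := by
    rw [dot_add_left, dot_smul_left, dot_smul_left]
    exact add_lt_add_of_le_of_lt (mul_le_mul_of_nonneg_left h₁ hx.le)
      (mul_lt_mul_of_pos_left (by linarith) hz)
  obtain ⟨m, hm, e⟩ := exists_supportFun_eq (h0 := Finset.mem_insert_self 0 {δ⁺, δ⁻})
    (x • w + z • w')
  rw [edgeFun, e]
  simp only [Finset.mem_insert, Finset.mem_singleton] at hm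
  rcases hm with rfl | rfl | rfl
  · rw [dot_zero_right]
    by_contra! hle
    change x * edgeFun δ w + z * edgeFun δ w' ≤ 0 at hle
    have h₃ := mul_nonneg hx.le ((isSupportFun_edgeFun δ).nonneg w)
    have h₄ := mul_nonneg hz.le ((isSupportFun_edgeFun δ).nonneg w')
    have hE : edgeFun δ w ≤ 0 := nonpos_of_mul_nonpos_right (a := x) (by linarith) hx
    have hE' : edgeFun δ w' ≤ 0 := nonpos_of_mul_nonpos_right (a := z) (by linarith) hz
    have hw₀ : w ≤ 0 := le_zero_of_dot_posPart_neg (δ := δ) (w' := w') (by linarith) (by linarith)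
      (by linarith)
    exact hw.elim hw₀.1.not_gt hw₀.2.not_gt
  · rwa [sub_eq_zero.1 horth]
  · exact hlt

end EdgeFun

/-- The support function of a Minkowski sum having edges in the directions of all differences of
points of `T`, and positive on every covector that has a positive coordinate. -/
def edgeSum (T : Finset (ℤ × ℤ)) : ℤ × ℤ → ℤ :=
  ∑ δ ∈ insert (1, -1) ((T ×ˢ T).image fun b => b.1 - b.2), edgeFun δ

section EdgeSum

variable {T : Finset (ℤ × ℤ)} {w : ℤ × ℤ}

lemma isSupportFun_edgeSum (T : Finset (ℤ × ℤ)) : IsSupportFun (edgeSum T) :=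
  IsSupportFun.sum _ fun δ _ => isSupportFun_edgeFun δ

lemma edgeSum_pos (T : Finset (ℤ × ℤ)) (hw : 0 < w.1 ∨ 0 < w.2) : 0 < edgeSum T w := by
  have hle : edgeFun (1, -1) w ≤ edgeSum T w := by
    rw [edgeSum, Finset.sum_apply]
    exact Finset.single_le_sum (f := fun δ => edgeFun δ w)
      (fun δ _ => (isSupportFun_edgeFun δ).nonneg w) (Finset.mem_insert_self _ _)
  have h₁ := dot_posPart_le_edgeFun (δ := (1, -1)) (w := w)
  have h₂ := dot_negPart_le_edgeFun (δ := (1, -1)) (w := w)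
  change w.1 * 1 + w.2 * 0 ≤ _ at h₁
  change w.1 * 0 + w.2 * 1 ≤ _ at h₂
  omega

lemma edgeSum_add_lt {β β' w w' : ℤ × ℤ} (hβ : β ∈ T) (hβ' : β' ∈ T) {x z : ℤ} (hx : 0 < x)
    (hz : 0 < z) (hw : 0 < w.1 ∨ 0 < w.2) (horth : dot (x • w + z • w') (β' - β) = 0)
    (hneg : dot w (β' - β) < 0) (hpos : 0 < dot w' (β' - β)) :
    edgeSum T (x • w + z • w') < x * edgeSum T w + z * edgeSum T w' := by
  simp only [edgeSum, Finset.sum_apply, Finset.mul_sum, ← Finset.sum_add_distrib]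
  refine Finset.sum_lt_sum (fun δ _ => ?_) ⟨β' - β, ?_, edgeFun_add_lt hx hz hw horth hneg hpos⟩
  · simpa using (isSupportFun_edgeFun δ).mul_le_add (z := 1) hx.le hz.le (one_smul _ _).symm
  · exact Finset.mem_insert_of_mem <|
      Finset.mem_image.2 ⟨(β', β), Finset.mk_mem_product hβ' hβ, rfl⟩

end EdgeSum

/-! ### The codimension of the truncated ideal -/

/-- The polynomials supported in the lattice polygon of `h`. -/
def polygonSpace (n : ℕ) (h : ℤ × ℤ → ℤ) : Submodule ℂ P2 :=
  restrictSupport ℂ {m | toLattice m ∈ latticePolygon n h}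

section PolygonSpace

variable {n : ℕ} {h c : ℤ × ℤ → ℤ} {f g u : P2}

lemma mem_polygonSpace : u ∈ polygonSpace n h ↔ ∀ w ∈ rays n, u ∈ weightLE w (h w) := by
  simp only [polygonSpace, mem_restrictSupport_iff, mem_weightLE]
  exact ⟨fun hu w hw m hm => hu hm w hw, fun hu m hm w hw => hu w hw m hm⟩

lemma IsSupportFun.image_toLattice_preimage (hh : IsSupportFun h) (n : ℕ) :
    toLattice '' {m | toLattice m ∈ latticePolygon n h} = latticePolygon n h := by
  refine Set.image_preimage_eq_of_subset fun x hx => exists_toLattice_eq ?_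
  have h₁ := hx (-1, 0) (by simp [rays])
  have h₂ := hx (0, -1) (by simp [rays])
  rw [hh.eq_zero_of_nonpos _ (by decide)] at h₁ h₂
  simp only [dot] at h₁ h₂
  exact ⟨by dsimp; omega, by dsimp; omega⟩

lemma IsSupportFun.finite_polygonSpace (hh : IsSupportFun h) (n : ℕ) :
    Module.Finite ℂ (polygonSpace n h) :=
  have := ((finite_latticePolygon hh n).preimage toLattice_injective.injOn).to_subtype
  Module.Finite.of_basis (basisRestrictSupport ℂ (toLattice ⁻¹' latticePolygon n h))

lemma IsSupportFun.finrank_polygonSpace (hh : IsSupportFun h) (n : ℕ) :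
    Module.finrank ℂ (polygonSpace n h) = (latticePolygon n h).ncard := by
  rw [polygonSpace, Module.finrank_eq_nat_card_basis (basisRestrictSupport ℂ _),
    Nat.card_coe_set_eq, ← Set.ncard_image_of_injective _ toLattice_injective,
    hh.image_toLattice_preimage]

lemma IsSupportFun.mem_weightLE_of_nonpos (hh : IsSupportFun h) {w : ℤ × ℤ} (hw : w ≤ 0) (u : P2) :
    u ∈ weightLE w (h w) :=
  mem_weightLE.2 fun m _ => (hh.eq_zero_of_nonpos w hw).symm ▸ dot_nonpos hw (toLattice_nonneg m)

lemma mul_mem_polygonSpace (g : P2) (hu : u ∈ polygonSpace n c) :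
    u * g ∈ polygonSpace n (c + newtonFun g) :=
  mem_polygonSpace.2 fun w hw =>
    mul_mem_weightLE (mem_polygonSpace.1 hu w hw) (mem_weightLE_newtonFun g w)

lemma QuasiConvenient.mem_polygonSpace_of_mul (hg : QuasiConvenient g) (hc : IsSupportFun c)
    (hu : u * g ∈ polygonSpace n (c + newtonFun g)) : u ∈ polygonSpace n c := by
  refine mem_polygonSpace.2 fun w hw => ?_
  by_cases hpos : 0 < w.1 ∨ 0 < w.2
  · refine mem_weightLE.2 fun m hm => ?_
    obtain ⟨β, hβ, e⟩ := hg.exists_dot_eq_newtonFun hpos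
    obtain ⟨μ, hμ, hle⟩ := exists_dot_add_dot_le hm hβ w
    rw [e] at hle
    exact le_of_add_le_add_right (hle.trans (mem_weightLE.1 (mem_polygonSpace.1 hu w hw) μ hμ))
  · exact hc.mem_weightLE_of_nonpos (nonpos_of_not_pos hpos) u

/-- The part of the ideal `(f, g)` visible to the polygon of `c + newtonFun f + newtonFun g`: the
combinations `u * f + v * g` whose two summands are supported in that polygon. -/
def truncatedIdeal (n : ℕ) (f g : P2) (c : ℤ × ℤ → ℤ) : Submodule ℂ P2 :=
  (polygonSpace n (c + newtonFun g)).map (LinearMap.mulRight ℂ f) ⊔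
    (polygonSpace n (c + newtonFun f)).map (LinearMap.mulRight ℂ g)

lemma mem_truncatedIdeal {F : P2} : F ∈ truncatedIdeal n f g c ↔
    ∃ u ∈ polygonSpace n (c + newtonFun g), ∃ v ∈ polygonSpace n (c + newtonFun f),
      u * f + v * g = F := by
  simp only [truncatedIdeal, Submodule.mem_sup, Submodule.mem_map, LinearMap.mulRight_apply,
    exists_exists_and_eq_and]

lemma truncatedIdeal_le (n : ℕ) (f g : P2) (c : ℤ × ℤ → ℤ) :
    truncatedIdeal n f g c ≤ polygonSpace n (c + newtonFun f + newtonFun g) := by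
  intro F hF
  obtain ⟨u, hu, v, hv, rfl⟩ := mem_truncatedIdeal.1 hF
  refine add_mem ?_ (mul_mem_polygonSpace g hv)
  rw [add_right_comm]
  exact mul_mem_polygonSpace f hu

-- By coprimality the syzygies of `(f, g)` are the multiples of `(g, -f)`.
lemma map_mulRight_inf_map_mulRight (hg : QuasiConvenient g) (hrel : IsRelPrime g f)
    (hc : IsSupportFun c) :
    (polygonSpace n (c + newtonFun g)).map (LinearMap.mulRight ℂ f) ⊓
      (polygonSpace n (c + newtonFun f)).map (LinearMap.mulRight ℂ g) =
        (polygonSpace n c).map (LinearMap.mulRight ℂ (f * g)) := by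
  apply le_antisymm
  · rintro _ ⟨⟨u, hu, rfl⟩, v, -, huv⟩
    simp only [LinearMap.mulRight_apply] at huv
    obtain ⟨h, rfl⟩ := hrel.dvd_of_dvd_mul_right (Dvd.intro_left v huv)
    rw [mul_comm] at hu
    refine ⟨h, hg.mem_polygonSpace_of_mul hc hu, ?_⟩
    simp only [LinearMap.mulRight_apply]
    ring
  · rintro _ ⟨h, hh, rfl⟩
    refine ⟨⟨h * g, mul_mem_polygonSpace g hh, ?_⟩, h * f, mul_mem_polygonSpace f hh, ?_⟩ <;>
    · simp only [LinearMap.mulRight_apply]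
      ring

lemma finrank_map_mulRight (hf : f ≠ 0) (V : Submodule ℂ P2) :
    Module.finrank ℂ (V.map (LinearMap.mulRight ℂ f)) = Module.finrank ℂ V :=
  (Submodule.equivMapOfInjective _ (mul_left_injective₀ hf) V).finrank_eq.symm

lemma finrank_truncatedIdeal (hf : QuasiConvenient f) (hg : QuasiConvenient g)
    (hrel : IsRelPrime g f) (hc : IsSupportFun c) :
    Module.finrank ℂ (truncatedIdeal n f g c) + (latticePolygon n c).ncard =
      (latticePolygon n (c + newtonFun g)).ncard + (latticePolygon n (c + newtonFun f)).ncard := by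
  have hcf := hc.add (isSupportFun_newtonFun f)
  have hcg := hc.add (isSupportFun_newtonFun g)
  have := hcf.finite_polygonSpace n
  have := hcg.finite_polygonSpace n
  have hdim := Submodule.finrank_sup_add_finrank_inf_eq
    ((polygonSpace n (c + newtonFun g)).map (LinearMap.mulRight ℂ f))
    ((polygonSpace n (c + newtonFun f)).map (LinearMap.mulRight ℂ g))
  rwa [map_mulRight_inf_map_mulRight hg hrel hc, finrank_map_mulRight hf.ne_zero,
    finrank_map_mulRight hg.ne_zero, finrank_map_mulRight (mul_ne_zero hf.ne_zero hg.ne_zero),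
    hc.finrank_polygonSpace, hcf.finrank_polygonSpace, hcg.finrank_polygonSpace] at hdim

theorem finrank_polygonSpace_eq_add_nuInf (hf : QuasiConvenient f) (hg : QuasiConvenient g)
    (hrel : IsRelPrime g f) (hc : IsSupportFun c) (hnf : DiamLE (newtonPts f) n)
    (hng : DiamLE (newtonPts g) n) (hnfg : DiamLE (newtonPts (f * g)) n) :
    (Module.finrank ℂ (polygonSpace n (c + newtonFun f + newtonFun g)) : ℝ) =
      Module.finrank ℂ (truncatedIdeal n f g c) + nuInf f g := by
  have hf₀ := isSupportFun_newtonFun f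
  have hg₀ := isSupportFun_newtonFun g
  have hkoszul : (Module.finrank ℂ (truncatedIdeal n f g c) : ℝ) + (latticePolygon n c).ncard =
      (latticePolygon n (c + newtonFun g)).ncard + (latticePolygon n (c + newtonFun f)).ncard := by
    exact_mod_cast finrank_truncatedIdeal hf hg hrel hc
  have hcount := ncard_latticePolygon_add_add hf₀ hg₀ hc n
  rw [nuInf, newton_eq_polygon hnf, newton_eq_polygon hng, newton_eq_polygon hnfg,
    newtonFun_mul hf hg, ((hc.add hf₀).add hg₀).finrank_polygonSpace]
  linarith

end PolygonSpace

/-! ### Syzygies of pairs without common zero in the torus -/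

/-- `φ` and `ψ` have a common zero with nonzero coordinates. -/
def HasTorusZero (φ ψ : P2) : Prop :=
  ∃ x y : ℂ, x ≠ 0 ∧ y ≠ 0 ∧ eval ![x, y] φ = 0 ∧ eval ![x, y] ψ = 0

section Syzygy

variable {φ ψ : P2}

lemma exists_monomial_mem_span_pair (h : ¬HasTorusZero φ ψ) :
    ∃ M, monomial M 1 ∈ Ideal.span {φ, ψ} := by
  have hmem : (X 0 * X 1 : P2) ∈ vanishingIdeal ℂ (zeroLocus ℂ (Ideal.span {φ, ψ})) := by
    refine mem_vanishingIdeal_iff.2 fun x hx => ?_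
    rw [zeroLocus_span] at hx
    have hx₁ := hx φ (by simp)
    have hx₂ := hx ψ (by simp)
    rw [aeval_eq_eval, show x = ![x 0, x 1] from List.ofFn_inj.1 rfl] at hx₁ hx₂
    rw [map_mul, aeval_X, aeval_X]
    by_contra hne
    exact h ⟨x 0, x 1, left_ne_zero_of_mul hne, right_ne_zero_of_mul hne, hx₁, hx₂⟩
  rw [vanishingIdeal_zeroLocus_eq_radical] at hmem
  obtain ⟨N, hN⟩ := hmem
  rw [mul_pow, X_pow_eq_monomial, X_pow_eq_monomial, monomial_mul, one_mul] at hN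
  exact ⟨_, hN⟩

lemma exists_mul_eq_mul_monomial {a b : P2} (h : ¬HasTorusZero φ ψ) (hab : a * φ + b * ψ = 0) :
    ∃ M q, q * ψ = a * monomial M 1 ∧ q * φ = -(b * monomial M 1) := by
  obtain ⟨M, hM⟩ := exists_monomial_mem_span_pair h
  obtain ⟨P, Q, hPQ⟩ := Ideal.mem_span_pair.1 hM
  refine ⟨M, a * Q - b * P, ?_, ?_⟩ <;> rw [← hPQ]
  · linear_combination (-P) * hab
  · linear_combination Q * hab

lemma monomial_one_dvd {R σ : Type*} [CommSemiring R] {M : σ →₀ ℕ} {p : MvPolynomial σ R}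
    (h : ∀ m ∈ p.support, M ≤ m) : monomial M 1 ∣ p := by
  rw [p.as_sum]
  refine Finset.dvd_sum fun m hm => ⟨monomial (m - M) (coeff m p), ?_⟩
  rw [monomial_mul, add_tsub_cancel_of_le (h m hm), one_mul]

end Syzygy

/-! ### Lowering the coefficients of a combination -/

/-- The polynomials whose monomials `m` exceed the polygon of `b` in the direction of a ray `w` by
at most `κ w / N`. -/
def excessLE (n : ℕ) (N : ℤ) (b κ : ℤ × ℤ → ℤ) : Submodule ℂ P2 :=
  restrictSupport ℂ {m | ∀ w ∈ rays n, N * (dot w (toLattice m) - b w) ≤ κ w}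

/-- The bounds `k * H`, lowered by one on the rays in `L`. -/
def level (k : ℤ) (H : ℤ × ℤ → ℤ) (L : Finset (ℤ × ℤ)) (w : ℤ × ℤ) : ℤ :=
  k * H w - if w ∈ L then 1 else 0

/-- The rays that have a positive coordinate. -/
def positiveRays (n : ℕ) : Finset (ℤ × ℤ) := (rays n).toFinset.filter fun w => 0 < w.1 ∨ 0 < w.2

lemma mem_positiveRays {n : ℕ} {w : ℤ × ℤ} :
    w ∈ positiveRays n ↔ w ∈ rays n ∧ (0 < w.1 ∨ 0 < w.2) := by
  rw [positiveRays, Finset.mem_filter, List.mem_toFinset]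

lemma level_le (k : ℤ) (H : ℤ × ℤ → ℤ) (L : Finset (ℤ × ℤ)) (w : ℤ × ℤ) :
    level k H L w ≤ k * H w := by
  rw [level]
  split <;> omega

lemma sub_one_le_level (k : ℤ) (H : ℤ × ℤ → ℤ) (L : Finset (ℤ × ℤ)) (w : ℤ × ℤ) :
    k * H w - 1 ≤ level k H L w := by
  rw [level]
  split <;> omega

section ExcessLE

variable {n : ℕ} {N k : ℤ} {b κ H : ℤ × ℤ → ℤ} {L : Finset (ℤ × ℤ)} {u c : P2} {w w' : ℤ × ℤ}

lemma mem_excessLE : u ∈ excessLE n N b κ ↔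
    ∀ m ∈ u.support, ∀ w ∈ rays n, N * (dot w (toLattice m) - b w) ≤ κ w :=
  mem_restrictSupport_iff ℂ

lemma mul_mem_excessLE (hN : 0 ≤ N) (hu : u ∈ excessLE n N 0 κ) (c : P2) :
    u * c ∈ excessLE n N (newtonFun c) κ := by
  classical
  refine mem_excessLE.2 fun m hm w hw => ?_
  obtain ⟨i, hi, j, hj, rfl⟩ := Finset.mem_add.1 (support_mul u c hm)
  have hj' := mem_weightLE.1 (mem_weightLE_newtonFun c w) j hj
  refine le_trans (mul_le_mul_of_nonneg_left ?_ hN) (mem_excessLE.1 hu i hi w hw)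
  rw [toLattice_add, dot_add_right, Pi.zero_apply]
  omega

lemma mem_excessLE_insert (hu : u ∈ excessLE n N b (level k H L))
    (hlt : ∀ m ∈ u.support, N * (dot w (toLattice m) - b w) < k * H w) :
    u ∈ excessLE n N b (level k H (insert w L)) := by
  refine mem_excessLE.2 fun m hm w' hw' => ?_
  by_cases h : w' = w
  · subst h
    rw [level, if_pos (Finset.mem_insert_self _ _)]
    exact Int.le_sub_one_of_lt (hlt m hm)
  · simpa only [level, Finset.mem_insert, h, false_or] using mem_excessLE.1 hu m hm w' hw'

lemma IsSupportFun.mul_dot_sub_nonpos (hb : IsSupportFun b) (hN : 0 ≤ N) (hw : w ≤ 0)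
    (m : Fin 2 →₀ ℕ) : N * (dot w (toLattice m) - b w) ≤ 0 := by
  rw [hb.eq_zero_of_nonpos w hw, sub_zero]
  exact mul_nonpos_of_nonneg_of_nonpos hN (dot_nonpos hw (toLattice_nonneg m))

lemma mul_dot_sub_le_of_dot_eq_zero (hb : IsSupportFun b) (hH : IsSupportFun H) (hN : 0 ≤ N)
    (hu : u ∈ excessLE n N b (level k H L)) {s δ : ℤ × ℤ} (hδ : δ ≠ 0)
    (hδn : |δ.1| + |δ.2| ≤ n) (hs : dot s δ = 0) {m : Fin 2 →₀ ℕ} (hm : m ∈ u.support) :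
    N * (dot s (toLattice m) - b s) ≤ k * H s := by
  by_cases hpos : 0 < s.1 ∨ 0 < s.2
  · obtain ⟨y, hy, r, hr, rfl⟩ := exists_pos_smul_ray hδ hδn hs hpos
    have hle := (mem_excessLE.1 hu m hm r hr).trans (level_le k H L r)
    have hmul := mul_le_mul_of_nonneg_left hle hy.le
    simp only [Int.cast_id, Prod.mk.eta, dot_smul_left, hb.map_smul hy.le, hH.map_smul hy.le]
    linarith
  · rw [hH.eq_zero_of_nonpos s (nonpos_of_not_pos hpos), mul_zero]
    exact hb.mul_dot_sub_nonpos hN (nonpos_of_not_pos hpos) m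

lemma mem_excessLE_of_succ (hb : IsSupportFun b) (hH : IsSupportFun H) (hN : 0 ≤ N)
    (hpos : ∀ w ∈ positiveRays n, 0 < H w) (hdvd : ∀ w ∈ positiveRays n, H w ∣ N)
    (hu : u ∈ excessLE n N b (level (k + 1) H (positiveRays n))) :
    u ∈ excessLE n N b (level k H ∅) := by
  refine mem_excessLE.2 fun m hm w hw => ?_
  simp only [level, Finset.notMem_empty, if_false, sub_zero]
  by_cases hw' : 0 < w.1 ∨ 0 < w.2
  · have hmem := mem_positiveRays.2 ⟨hw, hw'⟩
    obtain ⟨a, ha⟩ := (hdvd w hmem).mul_right (dot w (toLattice m) - b w)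
    have hle := mem_excessLE.1 hu m hm w hw
    rw [level, if_pos hmem, ha] at hle
    rw [ha, mul_comm k]
    refine mul_le_mul_of_nonneg_left (Int.lt_add_one_iff.1 ?_) (hpos w hmem).le
    exact lt_of_mul_lt_mul_left (a := H w) (by linarith) (hpos w hmem).le
  · rw [hH.eq_zero_of_nonpos w (nonpos_of_not_pos hw'), mul_zero]
    exact hb.mul_dot_sub_nonpos hN (nonpos_of_not_pos hw') m

lemma exists_mem_excessLE_level (hb : IsSupportFun b) (hH : IsSupportFun H) (hN : 0 ≤ N)
    (hpos : ∀ w ∈ positiveRays n, 0 < H w) (u : P2) :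
    ∃ k₀ : ℕ, ∀ k : ℤ, k₀ ≤ k → u ∈ excessLE n N b (level k H ∅) := by
  refine ⟨∑ p ∈ u.support ×ˢ (rays n).toFinset, (N * (dot p.2 (toLattice p.1) - b p.2)).toNat,
    fun k hk => mem_excessLE.2 fun m hm w hw => ?_⟩
  simp only [level, Finset.notMem_empty, if_false, sub_zero]
  by_cases hw' : 0 < w.1 ∨ 0 < w.2
  · have hle := Finset.single_le_sum
      (f := fun p : (Fin 2 →₀ ℕ) × ℤ × ℤ => (N * (dot p.2 (toLattice p.1) - b p.2)).toNat)
      (fun _ _ => Nat.zero_le _) (Finset.mk_mem_product hm (List.mem_toFinset.2 hw))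
    calc N * (dot w (toLattice m) - b w)
        ≤ k := (Int.self_le_toNat _).trans ((Int.ofNat_le.2 hle).trans hk)
      _ ≤ k * H w := le_mul_of_one_le_right ((Int.natCast_nonneg _).trans hk)
          (hpos w (mem_positiveRays.2 ⟨hw, hw'⟩))
  · rw [hH.eq_zero_of_nonpos w (nonpos_of_not_pos hw'), mul_zero]
    exact hb.mul_dot_sub_nonpos hN (nonpos_of_not_pos hw') m

lemma mem_polygonSpace_of_mem_excessLE (hN : 0 < N) {t : ℕ}
    (hu : u ∈ excessLE n N b (level (N * t) H ∅)) : u ∈ polygonSpace n (t • H + b) := by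
  refine mem_polygonSpace.2 fun w hw => mem_weightLE.2 fun m hm => ?_
  have hle := mem_excessLE.1 hu m hm w hw
  simp only [level, Finset.notMem_empty, if_false, sub_zero, mul_assoc] at hle
  have := le_of_mul_le_mul_left hle hN
  rw [Pi.add_apply, Pi.smul_apply, nsmul_eq_mul]
  omega

end ExcessLE

section KeyBound

variable {f g φ ψ q u : P2} {w w' : ℤ × ℤ}

lemma exists_dot_sub_le {M m β : Fin 2 →₀ ℕ} {d : ℤ}
    (hq : q * ψ = weightPart w d u * monomial M 1) (hm : m ∈ q.support) (hβ : β ∈ ψ.support)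
    (s : ℤ × ℤ) : ∃ μ ∈ u.support, dot w (toLattice μ) = d ∧
      dot s (toLattice m - toLattice M) ≤ dot s (toLattice μ) - dot s (toLattice β) := by
  classical
  obtain ⟨μ', hμ', hle⟩ := exists_dot_add_dot_le hm hβ s
  rw [hq] at hμ'
  obtain ⟨μ, hμ, i, hi, rfl⟩ := Finset.mem_add.1 (support_mul _ _ hμ')
  obtain rfl := Finset.mem_singleton.1 (support_monomial_subset hi)
  obtain ⟨hμu, hμd⟩ := mem_support_weightPart.1 hμ
  rw [toLattice_add, dot_add_right] at hle
  exact ⟨μ, hμu, hμd, by rw [dot_sub_right]; omega⟩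

lemma exists_max_or_edge {T : Finset (ℤ × ℤ)} (hT : T.Nonempty) (w w' : ℤ × ℤ) :
    ∃ β ∈ T, (∀ γ ∈ T, dot w γ ≤ dot w β) ∧ ((∀ γ ∈ T, dot w' γ ≤ dot w' β) ∨
      ∃ β' ∈ T, ∃ x z : ℤ, 0 < x ∧ 0 < z ∧ dot (x • w + z • w') (β' - β) = 0 ∧
        dot w (β' - β) < 0 ∧ 0 < dot w' (β' - β) ∧
        ∀ γ ∈ T, dot (x • w + z • w') γ ≤ dot (x • w + z • w') β) := by
  obtain ⟨β, hβ, hlex⟩ := T.exists_max_image (fun γ => toLex (dot w γ, dot w' γ)) hT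
  have hmax : ∀ γ ∈ T, dot w γ ≤ dot w β := fun γ hγ =>
    (Prod.Lex.toLex_le_toLex.1 (hlex γ hγ)).elim le_of_lt fun h => h.1.le
  have hlt : ∀ γ ∈ T, dot w' β < dot w' γ → dot w γ < dot w β := fun γ hγ h =>
    (Prod.Lex.toLex_le_toLex.1 (hlex γ hγ)).resolve_right fun h' => h'.2.not_gt h
  refine ⟨β, hβ, hmax, ?_⟩
  rcases forall_le_or_exists_edge (K := ℚ) (A := fun γ => ((dot w γ : ℤ) : ℚ))
    (A' := fun γ => ((dot w' γ : ℤ) : ℚ)) (mod_cast hmax) (mod_cast hlt) with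
    hall | ⟨β', hβ', hx, hz, hedge⟩
  · exact Or.inl (mod_cast hall)
  · have hx : dot w' β < dot w' β' := mod_cast hx
    have hz : dot w β' < dot w β := mod_cast hz
    refine Or.inr ⟨β', hβ', dot w' β' - dot w' β, dot w β - dot w β', by omega, by omega, ?_,
      by rw [dot_sub_right]; omega, by rw [dot_sub_right]; omega, fun γ hγ => ?_⟩
    · simp only [dot_sub_right, dot_add_left, dot_smul_left]
      ring
    · simp only [dot_add_left, dot_smul_left]
      exact_mod_cast hedge γ hγ

variable {n : ℕ} {N k e : ℤ} {L : Finset (ℤ × ℤ)} {M m : Fin 2 →₀ ℕ}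

-- The weights of the quotient `q` are bounded in the directions `-w` and `s`, where `s` is normal
-- to the edge `β β'`; as `edgeSum` is strictly convex across `s`, so they are in direction `w'`.
lemma mul_dot_sub_lt_of_edge (hn : DiamLE (newtonPts g) n) (hN : 0 < N) (hk : 0 < k)
    (hu : u ∈ excessLE n N (newtonFun g) (level k (edgeSum (newtonPts g)) L))
    (hw : 0 < w.1 ∨ 0 < w.2) (he : N * e = k * edgeSum (newtonPts g) w)
    (hq : q * weightPart w (newtonFun g w) g =
      weightPart w (e + newtonFun g w) u * monomial M 1)
    (hm : m ∈ q.support) {β : Fin 2 →₀ ℕ} (hβ : β ∈ (weightPart w (newtonFun g w) g).support)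
    {β' : ℤ × ℤ} (hβ' : β' ∈ newtonPts g) {x z : ℤ} (hx : 0 < x) (hz : 0 < z)
    (horth : dot (x • w + z • w') (β' - toLattice β) = 0)
    (hneg : dot w (β' - toLattice β) < 0) (hpos : 0 < dot w' (β' - toLattice β))
    (hmax : ∀ γ ∈ newtonPts g, dot (x • w + z • w') γ ≤ dot (x • w + z • w') (toLattice β)) :
    N * dot w' (toLattice m - toLattice M) < k * edgeSum (newtonPts g) w' := by
  set H := edgeSum (newtonPts g)
  set s := x • w + z • w' with hs
  set D := toLattice m - toLattice M
  obtain ⟨hβg, hβw⟩ := mem_support_weightPart.1 hβ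
  have hβT := toLattice_mem_newtonPts hβg
  have hDs : N * dot s D ≤ k * H s := by
    obtain ⟨μ, hμ, -, hle⟩ := exists_dot_sub_le hq hm hβ s
    have hne : β' - toLattice β ≠ 0 := fun h => hneg.ne (by rw [h, dot_zero_right])
    refine le_trans (mul_le_mul_of_nonneg_left ?_ hN.le)
      (mul_dot_sub_le_of_dot_eq_zero (isSupportFun_newtonFun g) (isSupportFun_edgeSum _) hN.le hu
        hne (hn β' hβ' _ hβT) horth hμ)
    rwa [newtonFun, supportFun_eq_dot hβT hmax]
  have hDw : e ≤ dot w D := by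
    obtain ⟨μ, -, hμd, hle⟩ := exists_dot_sub_le hq hm hβ (-w)
    change dot (-w) D ≤ _ at hle
    simp only [dot_neg_left] at hle
    omega
  have hstrict : H s < x * H w + z * H w' := edgeSum_add_lt hβT hβ' hx hz hw horth hneg hpos
  refine lt_of_mul_lt_mul_left (a := z) ?_ hz.le
  rw [hs, dot_add_left, dot_smul_left, dot_smul_left] at hDs
  calc z * (N * dot w' D) ≤ k * H s - x * (N * dot w D) := by linarith
    _ ≤ k * H s - x * (N * e) := by gcongr
    _ < k * (x * H w + z * H w') - x * (N * e) := by gcongr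
    _ = z * (k * H w') := by rw [he]; ring

lemma mul_dot_sub_le_level (hg : QuasiConvenient g) (hn : DiamLE (newtonPts g) n) (hN : 0 < N)
    (hk : 0 < k) (hu : u ∈ excessLE n N (newtonFun g) (level k (edgeSum (newtonPts g)) L))
    (hw : 0 < w.1 ∨ 0 < w.2) (he : N * e = k * edgeSum (newtonPts g) w)
    (hq : q * weightPart w (newtonFun g w) g =
      weightPart w (e + newtonFun g w) u * monomial M 1)
    (hm : m ∈ q.support) (hw' : w' ∈ rays n) :
    N * dot w' (toLattice m - toLattice M) ≤ level k (edgeSum (newtonPts g)) L w' := by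
  obtain ⟨β, hβ, hmax, hcase⟩ := exists_max_or_edge ⟨0, zero_mem_newtonPts g⟩ w w'
  have hβw : newtonFun g w = dot w β := supportFun_eq_dot hβ hmax
  obtain ⟨β, hβg, rfl⟩ := hg.exists_toLattice_eq_of_le hw hβ hβw.le
  have hβψ := mem_support_weightPart.2 ⟨hβg, hβw.symm⟩
  rcases hcase with hmax' | ⟨β', hβ', x, z, hx, hz, horth, hneg, hpos, hmax'⟩
  · obtain ⟨μ, hμ, -, hle⟩ := exists_dot_sub_le hq hm hβψ w'
    refine le_trans (mul_le_mul_of_nonneg_left ?_ hN.le) (mem_excessLE.1 hu μ hμ w' hw')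
    rwa [newtonFun, supportFun_eq_dot hβ hmax']
  · exact (Int.le_sub_one_of_lt (mul_dot_sub_lt_of_edge hn hN hk hu hw he hq hm hβψ hβ' hx hz
      horth hneg hpos hmax')).trans (sub_one_le_level _ _ _ _)

lemma le_of_mul_dot_sub_le {H : ℤ × ℤ → ℤ} (hH : IsSupportFun H) (hN : 0 < N)
    (hle : ∀ w ∈ rays n, N * dot w (toLattice m - toLattice M) ≤ level k H L w) : M ≤ m := by
  have hnonpos (w : ℤ × ℤ) (hw : w ∈ rays n) (hw₀ : w ≤ 0) :
      dot w (toLattice m - toLattice M) ≤ 0 := by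
    have h := (hle w hw).trans (level_le k H L w)
    rw [hH.eq_zero_of_nonpos w hw₀, mul_zero] at h
    exact nonpos_of_mul_nonpos_right h hN
  have h₁ := hnonpos (-1, 0) (by simp [rays]) (by decide)
  have h₂ := hnonpos (0, -1) (by simp [rays]) (by decide)
  simp only [dot, toLattice, Prod.fst_sub, Prod.snd_sub] at h₁ h₂
  exact Fin.forall_fin_two.2 ⟨by omega, by omega⟩

lemma exists_mul_weightPart_eq (hg : QuasiConvenient g) (hn : DiamLE (newtonPts g) n)
    (hN : 0 < N) (hk : 0 < k)
    (hu : u ∈ excessLE n N (newtonFun g) (level k (edgeSum (newtonPts g)) L))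
    (hw : 0 < w.1 ∨ 0 < w.2) (he : N * e = k * edgeSum (newtonPts g) w) {b : P2}
    (hrel : weightPart w (e + newtonFun g w) u * φ + b * weightPart w (newtonFun g w) g = 0)
    (hφ : ¬HasTorusZero φ (weightPart w (newtonFun g w) g)) :
    ∃ h ∈ excessLE n N 0 (level k (edgeSum (newtonPts g)) L),
      h * weightPart w (newtonFun g w) g = weightPart w (e + newtonFun g w) u ∧ h * φ = -b := by
  obtain ⟨M, q, hqψ, hqφ⟩ := exists_mul_eq_mul_monomial hφ hrel
  have hbound (m) (hm : m ∈ q.support) (w') (hw' : w' ∈ rays n) :=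
    mul_dot_sub_le_level hg hn hN hk hu hw he hqψ hm hw'
  obtain ⟨h, rfl⟩ := monomial_one_dvd fun m hm =>
    le_of_mul_dot_sub_le (isSupportFun_edgeSum _) hN (hbound m hm)
  have hM : monomial M (1 : ℂ) ≠ 0 := monomial_eq_zero.not.2 one_ne_zero
  refine ⟨h, mem_excessLE.2 fun m hm w' hw' => ?_, ?_, ?_⟩
  · have hmM : M + m ∈ (monomial M 1 * h).support := by
      rwa [mem_support_iff, coeff_monomial_mul, one_mul, ← mem_support_iff]
    have := hbound _ hmM w' hw'
    rw [toLattice_add, add_sub_cancel_left] at this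
    rwa [Pi.zero_apply, sub_zero]
  · refine mul_right_cancel₀ hM ?_
    rw [← hqψ]
    ring
  · refine mul_right_cancel₀ hM ?_
    rw [neg_mul, ← hqφ]
    ring

end KeyBound

section Lower

variable {f g u v F : P2} {w : ℤ × ℤ} {n : ℕ} {N k : ℤ} {L : Finset (ℤ × ℤ)}

lemma sub_mul_mem_weightLE {p q h : P2} {d e : ℤ} (hp : p ∈ weightLE w (e + d))
    (hq : q ∈ weightLE w d) (hh : h ∈ weightLE w e)
    (heq : h * weightPart w d q = weightPart w (e + d) p) :
    p - h * q ∈ weightLE w (e + d - 1) := by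
  have hsplit : p - h * q = p - weightPart w (e + d) p - h * (q - weightPart w d q) := by
    rw [mul_sub, heq]
    ring
  rw [hsplit]
  refine sub_mem (sub_weightPart_mem_weightLE hp) ?_
  rw [add_sub_assoc]
  exact mul_mem_weightLE hh (sub_weightPart_mem_weightLE hq)

lemma mem_excessLE_insert_of_mem_weightLE {b H : ℤ × ℤ → ℤ} {e : ℤ} (hN : 0 < N)
    (he : N * e = k * H w) (hu : u ∈ excessLE n N b (level k H L))
    (hlow : u ∈ weightLE w (e + b w - 1)) : u ∈ excessLE n N b (level k H (insert w L)) :=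
  mem_excessLE_insert hu fun m hm => by
    rw [← he]
    have := mem_weightLE.1 hlow m hm
    exact mul_lt_mul_of_pos_left (by omega) hN

lemma mem_weightLE_of_mem_excessLE {b H : ℤ × ℤ → ℤ} {e : ℤ} (hN : 0 < N)
    (he : N * e = k * H w) (hw : w ∈ rays n) (hu : u ∈ excessLE n N b (level k H L)) :
    u ∈ weightLE w (e + b w) := by
  refine mem_weightLE.2 fun m hm => ?_
  have hle := (mem_excessLE.1 hu m hm w hw).trans (level_le k H L w)
  rw [← he] at hle
  have := le_of_mul_le_mul_left hle hN
  omega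

-- If the leading parts of `u * f` and `v * g` cancel, they come from a multiple of the Koszul
-- syzygy `(g, -f)`, which can be subtracted from `(u, v)`.
lemma exists_mem_excessLE_insert (hg : QuasiConvenient g) (hn : DiamLE (newtonPts g) n)
    (hN : 0 < N) {t : ℤ} (ht : 0 ≤ t) (hk : N * t < k)
    (hu : u ∈ excessLE n N (newtonFun g) (level k (edgeSum (newtonPts g)) L))
    (hv : v ∈ excessLE n N (newtonFun f) (level k (edgeSum (newtonPts g)) L))
    (hw : w ∈ positiveRays n)
    (hF : u * f + v * g ∈
      weightLE w (t * edgeSum (newtonPts g) w + newtonFun f w + newtonFun g w))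
    (hnd : ¬HasTorusZero (weightPart w (newtonFun f w) f) (weightPart w (newtonFun g w) g)) :
    ∃ u' ∈ excessLE n N (newtonFun g) (level k (edgeSum (newtonPts g)) (insert w L)),
      ∃ v' ∈ excessLE n N (newtonFun f) (level k (edgeSum (newtonPts g)) (insert w L)),
        u' * f + v' * g = u * f + v * g := by
  set H := edgeSum (newtonPts g)
  obtain ⟨hwr, hpos⟩ := mem_positiveRays.1 hw
  by_cases hdvd : N ∣ k * H w
  swap
  · have hlt {a : P2} {b : ℤ × ℤ → ℤ} (ha : a ∈ excessLE n N b (level k H L)) :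
        a ∈ excessLE n N b (level k H (insert w L)) :=
      mem_excessLE_insert ha fun m hm => ((mem_excessLE.1 ha m hm w hwr).trans
        (level_le k H L w)).lt_of_ne fun h => hdvd (h ▸ dvd_mul_right _ _)
    exact ⟨u, hlt hu, v, hlt hv, rfl⟩
  obtain ⟨e, he⟩ := hdvd
  replace he := he.symm
  have hte : t * H w < e := by
    have hlt := mul_lt_mul_of_pos_right hk (edgeSum_pos (newtonPts g) hpos)
    rw [← he, mul_assoc] at hlt
    exact lt_of_mul_lt_mul_left hlt hN.le
  have huw := mem_weightLE_of_mem_excessLE hN he hwr hu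
  have hvw := mem_weightLE_of_mem_excessLE hN he hwr hv
  have hfw := mem_weightLE_newtonFun f w
  have hgw := mem_weightLE_newtonFun g w
  have hrel : weightPart w (e + newtonFun g w) u * weightPart w (newtonFun f w) f +
      weightPart w (e + newtonFun f w) v * weightPart w (newtonFun g w) g = 0 := by
    rw [← weightPart_mul huw hfw, ← weightPart_mul hvw hgw, add_right_comm e, ← map_add]
    exact weightPart_eq_zero hF (by omega)
  obtain ⟨h, hh, hhg, hhf⟩ := exists_mul_weightPart_eq hg hn hN
    ((mul_nonneg hN.le ht).trans_lt hk) hu hpos he hrel hnd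
  have hhw : h ∈ weightLE w e := by simpa using mem_weightLE_of_mem_excessLE hN he hwr hh
  refine ⟨u - h * g, ?_, v - -h * f, ?_, by ring⟩
  · exact mem_excessLE_insert_of_mem_weightLE hN he (sub_mem hu (mul_mem_excessLE hN.le hh g))
      (sub_mul_mem_weightLE huw hgw hhw hhg)
  · exact mem_excessLE_insert_of_mem_weightLE hN he
      (sub_mem hv (mul_mem_excessLE hN.le (neg_mem hh) f))
      (sub_mul_mem_weightLE hvw hfw (neg_mem hhw) (by rw [neg_mul, hhf, neg_neg]))

end Lower

section Descent

variable {f g u v F : P2} {n : ℕ} {N : ℤ}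

lemma exists_mem_excessLE_positiveRays (hg : QuasiConvenient g) (hn : DiamLE (newtonPts g) n)
    (hnd : ∀ w ∈ positiveRays n,
      ¬HasTorusZero (weightPart w (newtonFun f w) f) (weightPart w (newtonFun g w) g))
    (hN : 0 < N) {t k : ℤ} (ht : 0 ≤ t) (hk : N * t < k)
    (hu : u ∈ excessLE n N (newtonFun g) (level k (edgeSum (newtonPts g)) ∅))
    (hv : v ∈ excessLE n N (newtonFun f) (level k (edgeSum (newtonPts g)) ∅))
    (hF : ∀ w ∈ rays n, u * f + v * g ∈
      weightLE w (t * edgeSum (newtonPts g) w + newtonFun f w + newtonFun g w)) :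
    ∃ u' ∈ excessLE n N (newtonFun g) (level k (edgeSum (newtonPts g)) (positiveRays n)),
      ∃ v' ∈ excessLE n N (newtonFun f) (level k (edgeSum (newtonPts g)) (positiveRays n)),
        u' * f + v' * g = u * f + v * g := by
  refine Finset.induction_on' (positiveRays n) ⟨u, hu, v, hv, rfl⟩ ?_
  rintro w L hw - - ⟨u', hu', v', hv', e⟩
  rw [← e] at hF ⊢
  exact exists_mem_excessLE_insert hg hn hN ht hk hu' hv' hw
    (hF w (mem_positiveRays.1 hw).1) (hnd w hw)

lemma exists_mem_excessLE_of_add (hg : QuasiConvenient g) (hn : DiamLE (newtonPts g) n)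
    (hnd : ∀ w ∈ positiveRays n,
      ¬HasTorusZero (weightPart w (newtonFun f w) f) (weightPart w (newtonFun g w) g))
    (hN : 0 < N) (hdvd : ∀ w ∈ positiveRays n, edgeSum (newtonPts g) w ∣ N) {t : ℕ} (j : ℕ)
    (hu : u ∈ excessLE n N (newtonFun g) (level (N * t + j) (edgeSum (newtonPts g)) ∅))
    (hv : v ∈ excessLE n N (newtonFun f) (level (N * t + j) (edgeSum (newtonPts g)) ∅))
    (hF : u * f + v * g ∈
      polygonSpace n (t • edgeSum (newtonPts g) + newtonFun f + newtonFun g)) :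
    ∃ u' ∈ excessLE n N (newtonFun g) (level (N * t) (edgeSum (newtonPts g)) ∅),
      ∃ v' ∈ excessLE n N (newtonFun f) (level (N * t) (edgeSum (newtonPts g)) ∅),
        u' * f + v' * g = u * f + v * g := by
  have hH : IsSupportFun (edgeSum (newtonPts g)) := isSupportFun_edgeSum _
  have hHpos : ∀ w ∈ positiveRays n, 0 < edgeSum (newtonPts g) w :=
    fun w hw => edgeSum_pos _ (mem_positiveRays.1 hw).2
  induction j generalizing u v with
  | zero => exact ⟨u, by simpa using hu, v, by simpa using hv, rfl⟩
  | succ j ih =>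
    rw [Nat.cast_succ, ← add_assoc] at hu hv
    obtain ⟨u', hu', v', hv', e⟩ := exists_mem_excessLE_positiveRays hg hn hnd hN
      t.cast_nonneg (by omega) hu hv fun w hw => by simpa using mem_polygonSpace.1 hF w hw
    rw [← e] at hF ⊢
    exact ih (mem_excessLE_of_succ (isSupportFun_newtonFun g) hH hN.le hHpos hdvd hu')
      (mem_excessLE_of_succ (isSupportFun_newtonFun f) hH hN.le hHpos hdvd hv') hF

theorem mem_truncatedIdeal_of_mem_span (hg : QuasiConvenient g) (hn : DiamLE (newtonPts g) n)
    (hnd : ∀ w ∈ positiveRays n,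
      ¬HasTorusZero (weightPart w (newtonFun f w) f) (weightPart w (newtonFun g w) g)) (t : ℕ)
    (hF : F ∈ polygonSpace n (t • edgeSum (newtonPts g) + newtonFun f + newtonFun g))
    (hFI : F ∈ Ideal.span {f, g}) : F ∈ truncatedIdeal n f g (t • edgeSum (newtonPts g)) := by
  set H := edgeSum (newtonPts g)
  have hH : IsSupportFun H := isSupportFun_edgeSum _
  have hHpos : ∀ w ∈ positiveRays n, 0 < H w := fun w hw => edgeSum_pos _ (mem_positiveRays.1 hw).2
  -- Divisibility by all values of `H` makes the bounds at level `k` on the positive rays integral.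
  set N := ∏ w ∈ positiveRays n, H w
  have hN : 0 < N := Finset.prod_pos hHpos
  have hdvd : ∀ w ∈ positiveRays n, H w ∣ N := fun w hw => Finset.dvd_prod_of_mem H hw
  obtain ⟨u, v, rfl⟩ := Ideal.mem_span_pair.1 hFI
  obtain ⟨k₁, hk₁⟩ := exists_mem_excessLE_level (isSupportFun_newtonFun g) hH hN.le hHpos u
  obtain ⟨k₂, hk₂⟩ := exists_mem_excessLE_level (isSupportFun_newtonFun f) hH hN.le hHpos v
  have hNt : 0 ≤ N * t := mul_nonneg hN.le t.cast_nonneg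
  obtain ⟨u', hu', v', hv', e⟩ := exists_mem_excessLE_of_add hg hn hnd hN hdvd (k₁ + k₂)
    (hk₁ _ (by push_cast; omega)) (hk₂ _ (by push_cast; omega)) hF
  exact mem_truncatedIdeal.2 ⟨u', mem_polygonSpace_of_mem_excessLE hN hu', v',
    mem_polygonSpace_of_mem_excessLE hN hv', e⟩

end Descent

/-! ### Filtrations of a quotient space -/

section Filtration

variable {K E Q : Type*} [Field K] [AddCommGroup E] [Module K E] [AddCommGroup Q] [Module K Q]
  {π : E →ₗ[K] Q}

lemma finrank_map_add_finrank_inf_ker (π : E →ₗ[K] Q) (V : Submodule K E) [Module.Finite K V] :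
    Module.finrank K (V.map π) + Module.finrank K (V ⊓ LinearMap.ker π : Submodule K E) =
      Module.finrank K V := by
  have h := LinearMap.finrank_range_add_finrank_ker (π.domRestrict V)
  rwa [LinearMap.range_domRestrict, LinearMap.ker_domRestrict,
    ← Submodule.finrank_map_subtype_eq V, Submodule.map_comap_subtype] at h

lemma exists_map_eq_top_of_finrank_map_le (hπ : Function.Surjective π) {V : ℕ → Submodule K E}
    (hmono : Monotone V) (hex : ∀ x, ∃ t, x ∈ V t) (hfin : ∀ t, Module.Finite K (V t)) {B : ℕ}
    (hB : ∀ t, Module.finrank K ((V t).map π) ≤ B) : ∃ t, (V t).map π = ⊤ := by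
  have hbdd : BddAbove (Set.range fun t => Module.finrank K ((V t).map π)) :=
    ⟨B, Set.forall_mem_range.2 hB⟩
  obtain ⟨t, ht⟩ := Nat.sSup_mem (Set.range_nonempty _) hbdd
  refine ⟨t, eq_top_iff.2 fun y _ => ?_⟩
  obtain ⟨x, rfl⟩ := hπ y
  obtain ⟨s, hs⟩ := hex x
  have heq : (V t).map π = (V (max s t)).map π :=
    Submodule.eq_of_le_of_finrank_le (Submodule.map_mono (hmono (le_max_right s t)))
      ((le_csSup hbdd ⟨max s t, rfl⟩).trans ht.ge)
  exact heq ▸ Submodule.mem_map_of_mem (hmono (le_max_left s t) hs)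

variable {V I : Submodule K E} [Module.Finite K V] {ν : ℝ}

lemma finrank_map_le_of_finrank_eq_add (hI : I ≤ V ⊓ LinearMap.ker π)
    (hν : (Module.finrank K V : ℝ) = Module.finrank K I + ν) :
    (Module.finrank K (V.map π) : ℝ) ≤ ν := by
  have : Module.Finite K (V ⊓ LinearMap.ker π : Submodule K E) :=
    Submodule.finiteDimensional_of_le inf_le_left
  rw [← finrank_map_add_finrank_inf_ker π V, Nat.cast_add] at hν
  have hle : (Module.finrank K I : ℝ) ≤ Module.finrank K (V ⊓ LinearMap.ker π : Submodule K E) :=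
    mod_cast Submodule.finrank_mono hI
  linarith

lemma finrank_eq_iff_inf_ker_le (htop : V.map π = ⊤) (hI : I ≤ V ⊓ LinearMap.ker π)
    (hν : (Module.finrank K V : ℝ) = Module.finrank K I + ν) :
    (Module.finrank K Q : ℝ) = ν ↔ V ⊓ LinearMap.ker π ≤ I := by
  have : Module.Finite K (V ⊓ LinearMap.ker π : Submodule K E) :=
    Submodule.finiteDimensional_of_le inf_le_left
  rw [← finrank_map_add_finrank_inf_ker π V, htop, finrank_top, Nat.cast_add] at hν
  constructor
  · intro hQ
    rw [hQ, add_comm, add_left_inj, Nat.cast_inj] at hν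
    exact (Submodule.eq_of_le_of_finrank_eq hI hν.symm).ge
  · intro hle
    rw [hI.antisymm hle] at hν
    linarith

end Filtration

/-! ### The dimension of the quotient ring -/

/-- The projection of `ℂ[X, Y]` onto its quotient by the ideal `(f, g)`, as a linear map. -/
def quotientMap (f g : P2) : P2 →ₗ[ℂ] P2 ⧸ Ideal.span {f, g} :=
  (Ideal.Quotient.mkₐ ℂ (Ideal.span {f, g})).toLinearMap

/-- The filtration of `ℂ[X, Y]` by the polygons of `t • edgeSum (newtonPts g)`, enlarged by the
Newton diagrams of `f` and `g`. -/
def filtration (n : ℕ) (f g : P2) (t : ℕ) : Submodule ℂ P2 :=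
  polygonSpace n (t • edgeSum (newtonPts g) + newtonFun f + newtonFun g)

section Quotient

variable {f g F : P2} {n t : ℕ} {w : ℤ × ℤ} {c h : ℤ × ℤ → ℤ}

lemma mem_ker_quotientMap : F ∈ LinearMap.ker (quotientMap f g) ↔ F ∈ Ideal.span {f, g} :=
  LinearMap.mem_ker.trans Ideal.Quotient.eq_zero_iff_mem

lemma isSupportFun_smul_edgeSum_add (f g : P2) (t : ℕ) :
    IsSupportFun (t • edgeSum (newtonPts g) + newtonFun f + newtonFun g) :=
  (((isSupportFun_edgeSum _).nsmul t).add (isSupportFun_newtonFun f)).add (isSupportFun_newtonFun g)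

instance finite_filtration (n : ℕ) (f g : P2) (t : ℕ) : Module.Finite ℂ (filtration n f g t) :=
  (isSupportFun_smul_edgeSum_add f g t).finite_polygonSpace n

lemma filtration_mono (n : ℕ) (f g : P2) : Monotone (filtration n f g) := by
  refine fun t s hts u hu => mem_polygonSpace.2 fun w hw =>
    weightLE_mono ?_ (mem_polygonSpace.1 hu w hw)
  have hH := (isSupportFun_edgeSum (newtonPts g)).nonneg w
  simp only [Pi.add_apply, Pi.smul_apply]
  gcongr

lemma exists_mem_filtration (n : ℕ) (f g u : P2) : ∃ t, u ∈ filtration n f g t := by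
  obtain ⟨t, ht⟩ := exists_mem_excessLE_level
    ((isSupportFun_newtonFun f).add (isSupportFun_newtonFun g)) (isSupportFun_edgeSum _) zero_le_one
    (fun w hw => edgeSum_pos (newtonPts g) (mem_positiveRays (n := n).1 hw).2) u
  refine ⟨t, ?_⟩
  rw [filtration, add_assoc]
  exact mem_polygonSpace_of_mem_excessLE one_pos (by simpa using ht t le_rfl)

lemma truncatedIdeal_le_filtration_inf_ker (n : ℕ) (f g : P2) (t : ℕ) :
    truncatedIdeal n f g (t • edgeSum (newtonPts g)) ≤
      filtration n f g t ⊓ LinearMap.ker (quotientMap f g) := by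
  refine le_inf (truncatedIdeal_le n f g _) fun F hF => mem_ker_quotientMap.2 ?_
  obtain ⟨u, -, v, -, e⟩ := mem_truncatedIdeal.1 hF
  exact Ideal.mem_span_pair.2 ⟨u, v, e⟩

lemma weightPart_monomial_one (w : ℤ × ℤ) (m : Fin 2 →₀ ℕ) :
    weightPart w (dot w (toLattice m)) (monomial m (1 : ℂ)) = monomial m 1 := by
  ext k
  rw [coeff_weightPart, coeff_monomial]
  split_ifs with h₁ h₂ h₂
  · rfl
  · rfl
  · exact absurd (by rw [h₂]) h₁
  · rfl

lemma eval_monomial_one_ne_zero {R σ : Type*} [CommRing R] [IsDomain R] {x : σ → R}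
    (hx : ∀ i, x i ≠ 0) (m : σ →₀ ℕ) : eval x (monomial m 1) ≠ 0 := by
  rw [eval_monomial, one_mul]
  exact Finset.prod_ne_zero_iff.2 fun i _ => pow_ne_zero _ (hx i)

lemma IsSupportFun.exists_monomial_mem_polygonSpace (hh : IsSupportFun h) (n : ℕ) (w : ℤ × ℤ) :
    ∃ m, dot w (toLattice m) = h w ∧ monomial m 1 ∈ polygonSpace n h := by
  obtain ⟨x, hx, hxh⟩ := hh.exists_dot_eq w
  obtain ⟨m, rfl⟩ : ∃ m, toLattice m = x := by
    have h₁ := hxh (-1, 0)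
    have h₂ := hxh (0, -1)
    rw [hh.eq_zero_of_nonpos _ (by decide)] at h₁ h₂
    simp only [dot] at h₁ h₂
    exact exists_toLattice_eq ⟨by dsimp; omega, by dsimp; omega⟩
  refine ⟨m, hx, mem_polygonSpace.2 fun w' _ => mem_weightLE.2 fun k hk => ?_⟩
  obtain rfl := Finset.mem_singleton.1 (support_monomial_subset hk)
  exact hxh w'

lemma eval_weightPart_of_mem_truncatedIdeal {z : Fin 2 → ℂ}
    (hf : eval z (weightPart w (newtonFun f w) f) = 0)
    (hg : eval z (weightPart w (newtonFun g w) g) = 0) (hw : w ∈ rays n)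
    (hF : F ∈ truncatedIdeal n f g c) :
    eval z (weightPart w (c w + newtonFun f w + newtonFun g w) F) = 0 := by
  obtain ⟨u, hu, v, hv, rfl⟩ := mem_truncatedIdeal.1 hF
  have huw := weightPart_mul (mem_polygonSpace.1 hu w hw) (mem_weightLE_newtonFun f w)
  have hvw := weightPart_mul (mem_polygonSpace.1 hv w hw) (mem_weightLE_newtonFun g w)
  simp only [Pi.add_apply] at huw hvw
  rw [add_right_comm] at huw
  rw [map_add, huw, hvw, map_add, map_mul, map_mul, hf, hg, mul_zero, mul_zero, add_zero]

-- A common torus zero of the leading parts kills the top weight part of every element of the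
-- truncated ideal, whereas modulo `(f, g)` a monomial of top weight can be lowered.
lemma not_hasTorusZero_of_inf_ker_le (htop : (filtration n f g t).map (quotientMap f g) = ⊤)
    (hle : filtration n f g (t + 1) ⊓ LinearMap.ker (quotientMap f g) ≤
      truncatedIdeal n f g ((t + 1) • edgeSum (newtonPts g))) (hw : w ∈ positiveRays n) :
    ¬HasTorusZero (weightPart w (newtonFun f w) f) (weightPart w (newtonFun g w) g) := by
  rintro ⟨x, y, hx, hy, hf, hg⟩
  obtain ⟨hwr, hpos⟩ := mem_positiveRays.1 hw
  obtain ⟨m, hm, hmV⟩ :=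
    (isSupportFun_smul_edgeSum_add f g (t + 1)).exists_monomial_mem_polygonSpace n w
  obtain ⟨G, hG, hmG⟩ : quotientMap f g (monomial m 1) ∈
      (filtration n f g t).map (quotientMap f g) := htop ▸ Submodule.mem_top
  have hdiff : monomial m 1 - G ∈ truncatedIdeal n f g ((t + 1) • edgeSum (newtonPts g)) :=
    hle ⟨sub_mem hmV (filtration_mono n f g t.le_succ hG), LinearMap.sub_mem_ker_iff.2 hmG.symm⟩
  have hGw : weightPart w (dot w (toLattice m)) G = 0 := by
    refine weightPart_eq_zero (mem_polygonSpace.1 hG w hwr) ?_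
    have := edgeSum_pos (newtonPts g) hpos
    rw [hm, succ_nsmul]
    simp only [Pi.add_apply]
    omega
  have heval := eval_weightPart_of_mem_truncatedIdeal hf hg hwr hdiff
  simp only [Pi.add_apply] at hm
  rw [← hm, map_sub, hGw, sub_zero, weightPart_monomial_one] at heval
  exact eval_monomial_one_ne_zero (Fin.forall_fin_two.2 ⟨hx, hy⟩) m heval

lemma exists_map_filtration_eq_top (hf : QuasiConvenient f) (hg : QuasiConvenient g)
    (hrel : IsRelPrime g f) (hnf : DiamLE (newtonPts f) n) (hng : DiamLE (newtonPts g) n)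
    (hnfg : DiamLE (newtonPts (f * g)) n) :
    ∃ t, (filtration n f g t).map (quotientMap f g) = ⊤ := by
  refine exists_map_eq_top_of_finrank_map_le (B := ⌊nuInf f g⌋₊) Ideal.Quotient.mk_surjective
    (filtration_mono n f g) (exists_mem_filtration n f g) inferInstance fun t => Nat.le_floor ?_
  exact finrank_map_le_of_finrank_eq_add (truncatedIdeal_le_filtration_inf_ker n f g t)
    (finrank_polygonSpace_eq_add_nuInf hf hg hrel ((isSupportFun_edgeSum _).nsmul t) hnf hng hnfg)

lemma finite_quotient_span_pair (hf : QuasiConvenient f) (hg : QuasiConvenient g)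
    (hrel : IsRelPrime g f) (hnf : DiamLE (newtonPts f) n) (hng : DiamLE (newtonPts g) n)
    (hnfg : DiamLE (newtonPts (f * g)) n) : Module.Finite ℂ (P2 ⧸ Ideal.span {f, g}) := by
  obtain ⟨t, ht⟩ := exists_map_filtration_eq_top hf hg hrel hnf hng hnfg
  exact ⟨ht ▸ (Module.Finite.iff_fg.1 inferInstance).map _⟩

theorem finrank_quotient_eq_nuInf_iff (hf : QuasiConvenient f) (hg : QuasiConvenient g)
    (hrel : IsRelPrime g f) (hnf : DiamLE (newtonPts f) n) (hng : DiamLE (newtonPts g) n)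
    (hnfg : DiamLE (newtonPts (f * g)) n) :
    (Module.finrank ℂ (P2 ⧸ Ideal.span {f, g}) : ℝ) = nuInf f g ↔ ∀ w ∈ positiveRays n,
      ¬HasTorusZero (weightPart w (newtonFun f w) f) (weightPart w (newtonFun g w) g) := by
  obtain ⟨t, ht⟩ := exists_map_filtration_eq_top hf hg hrel hnf hng hnfg
  have htop : (filtration n f g (t + 1)).map (quotientMap f g) = ⊤ :=
    top_le_iff.1 (ht.ge.trans (Submodule.map_mono (filtration_mono n f g t.le_succ)))
  rw [finrank_eq_iff_inf_ker_le htop (truncatedIdeal_le_filtration_inf_ker n f g (t + 1))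
    (finrank_polygonSpace_eq_add_nuInf hf hg hrel ((isSupportFun_edgeSum _).nsmul _) hnf hng hnfg)]
  exact ⟨fun hle w hw => not_hasTorusZero_of_inf_ker_le ht hle hw, fun hnd F hF =>
    mem_truncatedIdeal_of_mem_span hg hng hnd (t + 1) hF.1 (mem_ker_quotientMap.1 hF.2)⟩

end Quotient

/-! ### Initial forms -/

section InitialForm

variable {f g : P2} {w : ℤ × ℤ} {y : ℝ} {n : ℕ}

lemma wt_smul (y : ℝ) (w : ℤ × ℤ) (m : Fin 2 →₀ ℕ) :
    wt (y • ((w.1 : ℝ), (w.2 : ℝ))) m = y * (dot w (toLattice m) : ℤ) := by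
  simp only [wt, dot, toLattice, Prod.smul_mk, smul_eq_mul]
  push_cast
  ring

lemma QuasiConvenient.dw_smul (hf : QuasiConvenient f) (hy : 0 < y) (hw : 0 < w.1 ∨ 0 < w.2) :
    dw (y • ((w.1 : ℝ), (w.2 : ℝ))) f = y * newtonFun f w := by
  obtain ⟨m, hm, hmw⟩ := hf.exists_dot_eq_newtonFun hw
  refine IsGreatest.csSup_eq ⟨⟨m, hm, by rw [wt_smul, hmw]⟩, ?_⟩
  rintro _ ⟨k, hk, rfl⟩
  rw [wt_smul]
  gcongr
  exact mem_weightLE.1 (mem_weightLE_newtonFun f w) k hk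

lemma coeff_initForm (w : ℝ × ℝ) (f : P2) (m : Fin 2 →₀ ℕ) :
    coeff m (initForm w f) = if wt w m = dw w f then coeff m f else 0 := by
  classical
  rw [initForm, ← Finset.sum_filter, coeff_sum]
  simp only [coeff_monomial, Finset.sum_ite_eq', Finset.mem_filter, mem_support_iff]
  split_ifs <;> simp_all

lemma QuasiConvenient.initForm_smul (hf : QuasiConvenient f) (hy : 0 < y)
    (hw : 0 < w.1 ∨ 0 < w.2) :
    initForm (y • ((w.1 : ℝ), (w.2 : ℝ))) f = weightPart w (newtonFun f w) f := by
  ext m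
  rw [coeff_initForm, coeff_weightPart, hf.dw_smul hy hw, wt_smul]
  simp only [mul_right_inj' hy.ne', Int.cast_inj]

lemma exists_wt_eq_dw (hf : f ≠ 0) (w : ℝ × ℝ) : ∃ m ∈ f.support, wt w m = dw w f :=
  ((support_nonempty.2 hf).to_set.image _).csSup_mem (f.support.finite_toSet.image (wt w))

-- Otherwise the initial form is a monomial, which has no zero in the torus.
lemma exists_ne_wt_eq_of_eval_initForm_eq_zero (hf : f ≠ 0) {w : ℝ × ℝ} {z : Fin 2 → ℂ}
    (hz : ∀ i, z i ≠ 0) (h : eval z (initForm w f) = 0) :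
    ∃ m₁ ∈ f.support, ∃ m₂ ∈ f.support, m₁ ≠ m₂ ∧ wt w m₁ = wt w m₂ := by
  classical
  obtain ⟨m, hm, hmw⟩ := exists_wt_eq_dw hf w
  by_contra! hne
  have hinit : initForm w f = coeff m f • monomial m 1 := by
    ext k
    rw [coeff_initForm, coeff_smul, coeff_monomial, smul_eq_mul, mul_ite, mul_one, mul_zero]
    rcases eq_or_ne m k with rfl | hmk
    · rw [if_pos hmw, if_pos rfl]
    · rw [if_neg hmk, ite_eq_right_iff]
      exact fun hk => by_contra fun hkf =>
        hne m hm k (mem_support_iff.2 hkf) hmk (hmw.trans hk.symm)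
  rw [hinit, smul_eval] at h
  exact mul_ne_zero (mem_support_iff.1 hm) (eval_monomial_one_ne_zero hz m) h

lemma pairNondegAtInf_iff_forall_positiveRays (hf : QuasiConvenient f) (hg : QuasiConvenient g)
    (hn : DiamLE (newtonPts f) n) :
    PairNondegAtInf f g ↔ ∀ w ∈ positiveRays n,
      ¬HasTorusZero (weightPart w (newtonFun f w) f) (weightPart w (newtonFun g w) g) := by
  constructor
  · intro h w hw
    have hpos := (mem_positiveRays.1 hw).2
    rw [← hf.initForm_smul one_pos hpos, ← hg.initForm_smul one_pos hpos]
    exact h _ (by simpa using hpos)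
  · rintro h s hs ⟨x, y, hx, hy, hfz, hgz⟩
    obtain ⟨m₁, hm₁, m₂, hm₂, hne, hwt⟩ := exists_ne_wt_eq_of_eval_initForm_eq_zero hf.ne_zero
      (Fin.forall_fin_two.2 ⟨hx, hy⟩) hfz
    have hdot : dot s (((toLattice m₁ - toLattice m₂).1 : ℝ), ((toLattice m₁ - toLattice m₂).2 : ℝ))
        = 0 := by
      simp only [wt] at hwt
      simp only [dot, toLattice, Prod.fst_sub, Prod.snd_sub]
      push_cast
      linarith
    obtain ⟨r, hr, w, hw, rfl⟩ := exists_pos_smul_ray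
      (sub_ne_zero.2 (toLattice_injective.ne hne))
      (hn _ (toLattice_mem_newtonPts hm₁) _ (toLattice_mem_newtonPts hm₂)) hdot hs
    have hpos : 0 < w.1 ∨ 0 < w.2 := by simpa [hr] using hs
    rw [hf.initForm_smul hr hpos] at hfz
    rw [hg.initForm_smul hr hpos] at hgz
    exact h w (mem_positiveRays.2 ⟨hw, hpos⟩) ⟨x, y, hx, hy, hfz, hgz⟩

end InitialForm

/-! ### Intersection multiplicities -/

lemma mIdeal_injective : Function.Injective mIdeal := by
  rintro ⟨a, b⟩ ⟨c, d⟩ h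
  have hX : (X 0 - C a : P2) ∈ mIdeal (c, d) := h ▸ by simp [mIdeal, RingHom.mem_ker]
  have hY : (X 1 - C b : P2) ∈ mIdeal (c, d) := h ▸ by simp [mIdeal, RingHom.mem_ker]
  simp only [mIdeal, RingHom.mem_ker, map_sub, eval_X, eval_C, Matrix.cons_val_zero,
    Matrix.cons_val_one, sub_eq_zero] at hX hY
  rw [hX, hY]

lemma exists_mIdeal_eq (I : Ideal P2) [hI : I.IsMaximal] : ∃ P, mIdeal P = I := by
  obtain ⟨x, rfl⟩ := isMaximal_iff_eq_vanishingIdeal_singleton.1 hI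
  refine ⟨(x 0, x 1), ?_⟩
  ext p
  rw [mem_vanishingIdeal_singleton_iff, mIdeal, RingHom.mem_ker, aeval_eq_eval,
    ← List.ofFn_inj.1 (by simp : List.ofFn x = List.ofFn ![x 0, x 1])]

section Localization

variable {K R : Type*} [Field K] [CommRing R] [Algebra K R] {I P : Ideal R} [P.IsPrime]

lemma algebraMapSubmonoid_quotient_primeCompl {p : Ideal (R ⧸ I)} [p.IsPrime]
    (hp : P = p.comap (Ideal.Quotient.mk I)) :
    Algebra.algebraMapSubmonoid (R ⧸ I) P.primeCompl = p.primeCompl := by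
  subst hp
  ext x
  obtain ⟨x, rfl⟩ := Ideal.Quotient.mk_surjective x
  constructor
  · rintro ⟨y, hy, hyx⟩ hx
    exact hy (Ideal.mem_comap.2 (hyx ▸ hx))
  · exact fun hx => ⟨x, hx, rfl⟩

lemma isScalarTower_quotient_localization :
    IsScalarTower K (R ⧸ I)
      (Localization.AtPrime P ⧸ I.map (algebraMap R (Localization.AtPrime P))) :=
  IsScalarTower.of_algebraMap_eq fun _ => rfl

lemma finrank_localization_quotient_map (p : Ideal (R ⧸ I)) [p.IsPrime]
    (hp : P = p.comap (Ideal.Quotient.mk I)) :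
    Module.finrank K (Localization.AtPrime P ⧸ I.map (algebraMap R (Localization.AtPrime P))) =
      Module.finrank K (Localization.AtPrime p) := by
  have hloc : IsLocalization p.primeCompl
      (Localization.AtPrime P ⧸ I.map (algebraMap R (Localization.AtPrime P))) :=
    algebraMapSubmonoid_quotient_primeCompl hp ▸ inferInstance
  have := isScalarTower_quotient_localization (K := K) (I := I) (P := P)
  exact ((IsLocalization.algEquiv p.primeCompl (Localization.AtPrime P ⧸
    I.map (algebraMap R (Localization.AtPrime P))) (Localization.AtPrime p)).restrictScalars
      K).toLinearEquiv.finrank_eq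

end Localization

section Multiplicity

variable {f g : P2} {P : ℂ × ℂ}

lemma interMult_eq_finrank_quotient_map (f g : P2) (P : ℂ × ℂ) :
    interMult f g P = Module.finrank ℂ (Localization.AtPrime (mIdeal P) ⧸
      (Ideal.span {f, g}).map (algebraMap P2 (Localization.AtPrime (mIdeal P)))) := by
  rw [interMult, ← Set.image_pair, ← Ideal.map_span]

lemma span_pair_le_mIdeal_of_interMult_ne_zero (h : interMult f g P ≠ 0) :
    Ideal.span {f, g} ≤ mIdeal P := by
  contrapose! h
  obtain ⟨r, hr, hrP⟩ := SetLike.not_le_iff_exists.1 h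
  have htop : (Ideal.span {f, g}).map (algebraMap P2 (Localization.AtPrime (mIdeal P))) = ⊤ :=
    Ideal.eq_top_of_isUnit_mem _ (Ideal.mem_map_of_mem _ hr)
      (IsLocalization.map_units (M := (mIdeal P).primeCompl) _ ⟨r, hrP⟩)
  have := Ideal.Quotient.subsingleton_iff.2 htop
  rw [interMult_eq_finrank_quotient_map, Module.finrank_zero_of_subsingleton]

lemma exists_primeSpectrum_of_le_mIdeal (h : Ideal.span {f, g} ≤ mIdeal P) :
    ∃ p : PrimeSpectrum (P2 ⧸ Ideal.span {f, g}),
      mIdeal P = p.asIdeal.comap (Ideal.Quotient.mk _) := by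
  have hker : RingHom.ker (Ideal.Quotient.mk (Ideal.span {f, g})) ≤ mIdeal P := by
    rwa [Ideal.mk_ker]
  refine ⟨⟨_, Ideal.map_isPrime_of_surjective Ideal.Quotient.mk_surjective hker⟩, ?_⟩
  rw [Ideal.comap_map_of_surjective _ Ideal.Quotient.mk_surjective, ← RingHom.ker_eq_comap_bot,
    sup_eq_left.2 hker]

theorem finsum_interMult_eq_finrank [Module.Finite ℂ (P2 ⧸ Ideal.span {f, g})] :
    ∑ᶠ P, (interMult f g P : ℝ) = Module.finrank ℂ (P2 ⧸ Ideal.span {f, g}) := by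
  have : IsArtinianRing (P2 ⧸ Ideal.span {f, g}) := IsArtinianRing.of_finite ℂ _
  have : Fintype (PrimeSpectrum (P2 ⧸ Ideal.span {f, g})) := Fintype.ofFinite _
  have hex (p : PrimeSpectrum (P2 ⧸ Ideal.span {f, g})) :
      ∃ P, mIdeal P = p.asIdeal.comap (Ideal.Quotient.mk _) := by
    have := Ideal.comap_isMaximal_of_surjective (K := p.asIdeal) _
      (Ideal.Quotient.mk_surjective (I := Ideal.span {f, g}))
    exact exists_mIdeal_eq _
  choose φ hφ using hex
  have hinj : Function.Injective φ := fun p q hpq => PrimeSpectrum.ext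
    (Ideal.comap_injective_of_surjective _ Ideal.Quotient.mk_surjective
      ((hφ p).symm.trans (hpq ▸ hφ q)))
  have hsupp : (Function.support fun P => (interMult f g P : ℝ)) ⊆ Set.range φ := fun P hP => by
    obtain ⟨p, hp⟩ := exists_primeSpectrum_of_le_mIdeal
      (span_pair_le_mIdeal_of_interMult_ne_zero (Nat.cast_ne_zero.1 hP))
    exact ⟨p, mIdeal_injective ((hφ p).trans hp.symm)⟩
  rw [← Set.indicator_eq_self.2 hsupp, ← finsum_mem_def, finsum_mem_range hinj,
    finsum_eq_sum_of_fintype, IsArtinianRing.finrank_eq_sum_primeSpectrum, Nat.cast_sum]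
  exact Finset.sum_congr rfl fun p _ => congrArg _ <|
    (interMult_eq_finrank_quotient_map f g _).trans
      (finrank_localization_quotient_map p.asIdeal (hφ p))

end Multiplicity

/-- Kouchnirenko–Bernstein theorem, equality case. -/
theorem stmt13 (f g : P2) (hf : QuasiConvenient f) (hg : QuasiConvenient g)
    (hco : CoprimeDiv f g) :
    (∑ᶠ Pt : ℂ × ℂ, (interMult f g Pt : ℝ)) = nuInf f g ↔
      PairNondegAtInf f g := by
  obtain ⟨a, ha⟩ := exists_diamLE (newtonPts f)
  obtain ⟨b, hb⟩ := exists_diamLE (newtonPts g)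
  obtain ⟨c, hc⟩ := exists_diamLE (newtonPts (f * g))
  have hnf : DiamLE (newtonPts f) (a + b + c) := ha.mono (by omega)
  have hng : DiamLE (newtonPts g) (a + b + c) := hb.mono (by omega)
  have hnfg : DiamLE (newtonPts (f * g)) (a + b + c) := hc.mono (by omega)
  have hrel : IsRelPrime g f := fun d hdg hdf => hco d hdf hdg
  have := finite_quotient_span_pair hf hg hrel hnf hng hnfg
  rw [finsum_interMult_eq_finrank, finrank_quotient_eq_nuInf_iff hf hg hrel hnf hng hnfg,
    pairNondegAtInf_iff_forall_positiveRays hf hg hnf]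
end
end

section
/- The polynomial f(X,Y) = Y + X² + XY³ + X³Y⁴ + X⁵Y³ is nearly irreducible. -/
open MvPolynomial MeasureTheory Pointwise

noncomputable section

/-!
The polynomial `f = Y + X² + XY³ + X³Y⁴ + X⁵Y³` is irreducible over every integral domain, and by
the Nullstellensatz an irreducible polynomial over `ℂ` is nearly irreducible.

Suppose `f = gh`. Three monomial curves through the origin control `g` and `h`:
`f(0, T) = T`, `f(T, 0) = T²` and `f(T, -T²) = -T⁷`. By the first we may assume `g(0, 0) ≠ 0`; then
`g` is constant along the other two curves, so `h` contains `X²` and a monomial of `(1, 2)`-weight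
`7`. Since the top weights of `g` and `h` add up to at most that of `f`, which is `11` for `(1, 2)`
and `2` for `(1, -1)`, every monomial `XᵃYᵇ` of `g` satisfies `a + 2b ≤ 4` and `a ≤ b`. The four
such monomials have distinct `(1, 2)`-weights, so `g(T, -T²)` is constant only if `g` is.
-/

section CommSemiring

variable {σ R : Type*} [CommSemiring R]

theorem exists_mem_support_mul_add_le [NoZeroDivisors R] {M : Type*} [AddCommMonoid M]
    [LinearOrder M] [IsOrderedCancelAddMonoid M] (φ : (σ →₀ ℕ) →+ M) {p q : MvPolynomial σ R}
    {m n : σ →₀ ℕ} (hm : m ∈ p.support) (hn : n ∈ q.support) :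
    ∃ k ∈ (p * q).support, φ m + φ n ≤ φ k := by
  obtain ⟨m', hm', hm_max⟩ := p.support.exists_max_image φ ⟨m, hm⟩
  obtain ⟨n', hn', hn_max⟩ := q.support.exists_max_image φ ⟨n, hn⟩
  -- `φ` need not be injective: among its maximizers choose a pair whose sum is attained only once.
  obtain ⟨a, ha, b, hb, hab⟩ := UniqueSums.uniqueAdd_of_nonempty
    (A := {k ∈ p.support | φ k = φ m'}) (B := {k ∈ q.support | φ k = φ n'})
    ⟨m', by simp [hm']⟩ ⟨n', by simp [hn']⟩
  simp only [Finset.mem_filter] at ha hb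
  have hunique : UniqueAdd p.support q.support a b := by
    intro c d hc hd hcd
    have hφ : φ c + φ d = φ m' + φ n' := by rw [← map_add, hcd, map_add, ha.2, hb.2]
    obtain ⟨hcm, hdn⟩ := (add_eq_add_iff_eq_and_eq (hm_max c hc) (hn_max d hd)).mp hφ
    exact hab (Finset.mem_filter.mpr ⟨hc, hcm⟩) (Finset.mem_filter.mpr ⟨hd, hdn⟩) hcd
  refine ⟨a + b, ?_, ?_⟩
  · have hcoeff : (p * q).coeff (a + b) = p.coeff a * q.coeff b :=
      AddMonoidAlgebra.coeff_mul_add_of_uniqueAdd hunique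
    rw [mem_support_iff, hcoeff]
    exact mul_ne_zero (mem_support_iff.mp ha.1) (mem_support_iff.mp hb.1)
  · rw [map_add, ha.2, hb.2]
    exact add_le_add (hm_max m hm) (hn_max n hn)

/-- Restriction of a polynomial to the parametrized monomial curve `Xᵢ = aᵢ T ^ wᵢ`. A coefficient
`aᵢ = 0` puts the curve in the coordinate hyperplane `Xᵢ = 0`. -/
def monomialCurve (a : σ → R) (w : σ → ℕ) : MvPolynomial σ R →ₐ[R] Polynomial R :=
  aeval fun i => Polynomial.C (a i) * Polynomial.X ^ w i

theorem monomialCurve_monomial (a : σ → R) (w : σ → ℕ) (m : σ →₀ ℕ) (r : R) :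
    monomialCurve a w (monomial m r) =
      Polynomial.monomial (Finsupp.weight w m) (r * m.prod fun i k => a i ^ k) := by
  simp only [monomialCurve, aeval_monomial, Polynomial.algebraMap_eq, mul_pow, ← pow_mul,
    Finsupp.prod, Finset.prod_mul_distrib, Finset.prod_pow_eq_pow_sum, Finsupp.weight_apply,
    Finsupp.sum, smul_eq_mul, ← Polynomial.C_mul_X_pow_eq_monomial, map_mul, map_prod, map_pow,
    mul_comm (w _), mul_assoc]

theorem coeff_monomialCurve (a : σ → R) (w : σ → ℕ) (p : MvPolynomial σ R) (n : ℕ) :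
    (monomialCurve a w p).coeff n =
      ∑ m ∈ p.support with Finsupp.weight w m = n, p.coeff m * m.prod fun i k => a i ^ k := by
  conv_lhs => rw [p.as_sum, map_sum]
  simp only [monomialCurve_monomial, Polynomial.finsetSum_coeff, Polynomial.coeff_monomial,
    Finset.sum_filter]

theorem exists_mem_support_of_coeff_monomialCurve_ne_zero {a : σ → R} {w : σ → ℕ}
    {p : MvPolynomial σ R} {n : ℕ} (h : (monomialCurve a w p).coeff n ≠ 0) :
    ∃ m ∈ p.support, Finsupp.weight w m = n ∧ m.prod (fun i k => a i ^ k) ≠ 0 := by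
  rw [coeff_monomialCurve] at h
  obtain ⟨m, hm, hne⟩ := Finset.exists_ne_zero_of_sum_ne_zero h
  rw [Finset.mem_filter] at hm
  exact ⟨m, hm.1, hm.2, right_ne_zero_of_mul hne⟩

theorem coeff_monomialCurve_weight_of_injOn (a : σ → R) {w : σ → ℕ} {p : MvPolynomial σ R}
    (hinj : Set.InjOn (Finsupp.weight w) (p.support : Set (σ →₀ ℕ))) {m : σ →₀ ℕ}
    (hm : m ∈ p.support) :
    (monomialCurve a w p).coeff (Finsupp.weight w m) =
      p.coeff m * m.prod fun i k => a i ^ k := by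
  rw [coeff_monomialCurve, Finset.sum_eq_single_of_mem m (by simp [hm])]
  intro k hk hne
  rw [Finset.mem_filter] at hk
  exact absurd (hinj hk.1 hm hk.2) hne

theorem coeff_zero_monomialCurve (a : σ → R) {w : σ → ℕ} (hw : ∀ i, w i ≠ 0)
    (p : MvPolynomial σ R) : (monomialCurve a w p).coeff 0 = constantCoeff p := by
  have hcomp : Polynomial.constantCoeff.comp (monomialCurve a w).toRingHom = constantCoeff := by
    apply ringHom_ext
    · simp
    · simp [monomialCurve, (hw _).symm]
  exact congr($hcomp p)

end CommSemiring

theorem isUnit_of_dvd_X_pow {R : Type*} [CommRing R] [IsDomain R] {p : Polynomial R} {n : ℕ}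
    (hp : p ∣ Polynomial.X ^ n) (h0 : p.coeff 0 ≠ 0) : IsUnit p := by
  obtain ⟨i, -, hi⟩ := (dvd_prime_pow Polynomial.prime_X n).mp hp
  rcases Nat.eq_zero_or_pos i with rfl | hpos
  · exact associated_one_iff_isUnit.mp (by simpa using hi)
  · exact absurd (Polynomial.X_dvd_iff.mp ((dvd_pow_self _ hpos.ne').trans hi.symm.dvd)) h0

section IsDomain

variable {σ R : Type*} [CommRing R] [IsDomain R] {a : σ → R} {w : σ → ℕ}

theorem isUnit_monomialCurve_of_dvd (hw : ∀ i, w i ≠ 0) {p q : MvPolynomial σ R} {n : ℕ}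
    (hpq : p ∣ q) (hq : monomialCurve a w q ∣ Polynomial.X ^ n) (hp : constantCoeff p ≠ 0) :
    IsUnit (monomialCurve a w p) :=
  isUnit_of_dvd_X_pow ((map_dvd _ hpq).trans hq) (by rwa [coeff_zero_monomialCurve a hw])

theorem exists_mem_support_of_isUnit_monomialCurve {p q : MvPolynomial σ R}
    (hp : IsUnit (monomialCurve a w p)) {n : ℕ} (hn : (monomialCurve a w (p * q)).coeff n ≠ 0) :
    ∃ m ∈ q.support, Finsupp.weight w m = n ∧ m.prod (fun i k => a i ^ k) ≠ 0 := by
  obtain ⟨c, -, hc⟩ := Polynomial.isUnit_iff.mp hp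
  rw [map_mul, ← hc, Polynomial.coeff_C_mul] at hn
  exact exists_mem_support_of_coeff_monomialCurve_ne_zero (right_ne_zero_of_mul hn)

theorem isUnit_of_isUnit_monomialCurve (ha : ∀ i, a i ≠ 0) (hw : ∀ i, w i ≠ 0)
    {p : MvPolynomial σ R} (hinj : Set.InjOn (Finsupp.weight w) (p.support : Set (σ →₀ ℕ)))
    (hp : IsUnit (monomialCurve a w p)) : IsUnit p := by
  obtain ⟨c, hc, hcp⟩ := Polynomial.isUnit_iff.mp hp
  refine isUnit_iff_totalDegree_of_isReduced.mpr ⟨?_, ?_⟩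
  · rwa [← constantCoeff_eq, ← coeff_zero_monomialCurve a hw, ← hcp, Polynomial.coeff_C_zero]
  · refine (totalDegree_eq_zero_iff _ p).mpr fun m hm i => ?_
    have hcoeff : (monomialCurve a w p).coeff (Finsupp.weight w m) ≠ 0 := by
      rw [coeff_monomialCurve_weight_of_injOn a hinj hm]
      exact mul_ne_zero (mem_support_iff.mp hm)
        (Finset.prod_ne_zero_iff.mpr fun i _ => pow_ne_zero _ (ha i))
    have hweight : Finsupp.weight w m = 0 := by
      by_contra hne
      exact hcoeff (by rw [← hcp, Polynomial.coeff_C_of_ne_zero hne])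
    by_contra hi
    exact hw i (Nat.eq_zero_of_le_zero (hweight ▸ Finsupp.le_weight_of_ne_zero' w hi))

end IsDomain

theorem exists_eval_eq_zero_of_not_isUnit {σ K : Type*} [Finite σ] [Field K] [IsAlgClosed K]
    {p : MvPolynomial σ K} (hp : ¬IsUnit p) : ∃ x : σ → K, eval x p = 0 := by
  obtain ⟨I, hI, hpI⟩ := exists_max_ideal_of_mem_nonunits hp
  obtain ⟨x, rfl⟩ := isMaximal_iff_eq_vanishingIdeal_singleton.mp hI
  exact ⟨x, by simpa using hpI⟩

theorem isUnit_iff_totalDegree_eq_zero {σ K : Type*} [Field K] {p : MvPolynomial σ K} (hp : p ≠ 0) :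
    IsUnit p ↔ p.totalDegree = 0 := by
  refine ⟨fun h => (isUnit_iff_totalDegree_of_isReduced.mp h).2, fun h => ?_⟩
  rw [totalDegree_eq_zero_iff_eq_C] at h
  rw [h, isUnit_map_iff, isUnit_iff_ne_zero]
  exact fun h0 => hp (by rw [h, h0, map_zero])

theorem nearlyIrreducible_of_irreducible {f : P2} (hf : Irreducible f) : NearlyIrreducible f := by
  obtain ⟨x, hx⟩ := exists_eval_eq_zero_of_not_isUnit hf.not_isUnit
  have hx_eta : ![x 0, x 1] = x := by ext i; fin_cases i <;> rfl
  have eval_factor {g : P2} (hg : g ∣ f) (hdeg : 0 < g.totalDegree) :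
      eval ![x 0, x 1] g = 0 := by
    have hg0 : g ≠ 0 := ne_zero_of_dvd_ne_zero hf.ne_zero hg
    have hnot : ¬IsUnit g := (isUnit_iff_totalDegree_eq_zero hg0).not.mpr hdeg.ne'
    have hfg : f ∣ g := ((hf.dvd_iff.mp hg).resolve_left hnot).dvd
    rw [hx_eta, ← zero_dvd_iff, ← hx]
    exact map_dvd (eval x) hfg
  refine ⟨Nat.pos_of_ne_zero ((isUnit_iff_totalDegree_eq_zero hf.ne_zero).not.mp hf.not_isUnit), ?_⟩
  exact fun g h hg hh hgdeg hhdeg => ⟨x 0, x 1, eval_factor hg hgdeg, eval_factor hh hhdeg⟩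

/-- The polynomial of Example 3, over an arbitrary coefficient ring. -/
def exampleThree (R : Type*) [CommSemiring R] : MvPolynomial (Fin 2) R :=
  X 1 + X 0 ^ 2 + X 0 * X 1 ^ 3 + X 0 ^ 3 * X 1 ^ 4 + X 0 ^ 5 * X 1 ^ 3

section ExampleThree

variable {R : Type*} [CommSemiring R]

theorem eq_of_mem_support_X_pow_mul_X_pow {a b : ℕ} {m : Fin 2 →₀ ℕ}
    (hm : m ∈ (X 0 ^ a * X 1 ^ b : MvPolynomial (Fin 2) R).support) : (m 0, m 1) = (a, b) := by
  rw [X_pow_eq_monomial, X_pow_eq_monomial, monomial_mul] at hm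
  have hm_eq := Finset.mem_singleton.mp (support_monomial_subset hm)
  simp [hm_eq]

theorem mem_support_exampleThree {m : Fin 2 →₀ ℕ} (hm : m ∈ (exampleThree R).support) :
    (m 0, m 1) ∈ ({(0, 1), (2, 0), (1, 3), (3, 4), (5, 3)} : Set (ℕ × ℕ)) := by
  have hsum : exampleThree R = ∑ e ∈ {(0, 1), (2, 0), (1, 3), (3, 4), (5, 3)},
      X 0 ^ e.1 * X 1 ^ e.2 := by
    simp [exampleThree, add_assoc]
  rw [hsum] at hm
  classical
  obtain ⟨e, he, hme⟩ := Finset.mem_biUnion.mp (support_sum hm)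
  rw [eq_of_mem_support_X_pow_mul_X_pow hme]
  simpa using he

theorem fst_le_snd_add_two_of_mem_support_exampleThree {m : Fin 2 →₀ ℕ}
    (hm : m ∈ (exampleThree R).support) : m 0 ≤ m 1 + 2 := by
  have hmem := mem_support_exampleThree hm
  simp only [Set.mem_insert_iff, Set.mem_singleton_iff, Prod.mk.injEq] at hmem
  omega

theorem fst_add_two_mul_snd_le_of_mem_support_exampleThree {m : Fin 2 →₀ ℕ}
    (hm : m ∈ (exampleThree R).support) : m 0 + 2 * m 1 ≤ 11 := by
  have hmem := mem_support_exampleThree hm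
  simp only [Set.mem_insert_iff, Set.mem_singleton_iff, Prod.mk.injEq] at hmem
  omega

theorem monomialCurve_exampleThree_zero_one :
    monomialCurve ![0, 1] ![1, 1] (exampleThree R) = Polynomial.X := by
  simp [monomialCurve, exampleThree]

theorem monomialCurve_exampleThree_one_zero :
    monomialCurve ![1, 0] ![1, 1] (exampleThree R) = Polynomial.X ^ 2 := by
  simp [monomialCurve, exampleThree]

end ExampleThree

section ExampleThreeFactors

variable {R : Type*} [CommRing R]

theorem monomialCurve_exampleThree_one_neg_one :
    monomialCurve ![1, -1] ![1, 2] (exampleThree R) = -Polynomial.X ^ 7 := by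
  simp only [monomialCurve, exampleThree, map_add, map_mul, map_pow, map_one, map_neg, aeval_X,
    Matrix.cons_val_zero, Matrix.cons_val_one]
  ring

variable [IsDomain R] {g h : MvPolynomial (Fin 2) R}

theorem fst_le_snd_of_mul_eq_exampleThree (hgh : g * h = exampleThree R)
    (hunit : IsUnit (monomialCurve ![1, 0] ![1, 1] g)) {m : Fin 2 →₀ ℕ} (hm : m ∈ g.support) :
    m 0 ≤ m 1 := by
  obtain ⟨n, hn, hn_weight, hn_prod⟩ := exists_mem_support_of_isUnit_monomialCurve hunit (q := h)
    (n := 2) (by simp [hgh, monomialCurve_exampleThree_one_zero])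
  have hn0 : n 0 + n 1 = 2 := by simpa [Finsupp.weight_eq_sum] using hn_weight
  have hn1 : n 1 = 0 := by simpa using hn_prod
  obtain ⟨k, hk, hle⟩ := exists_mem_support_mul_add_le (Finsupp.weight ![(1 : ℤ), -1]) hm hn
  have hweight : (m 0 - m 1 + (n 0 - n 1) : ℤ) ≤ k 0 - k 1 := by
    simpa [Finsupp.weight_eq_sum, sub_eq_add_neg] using hle
  have hk_le := fst_le_snd_add_two_of_mem_support_exampleThree (hgh ▸ hk)
  omega

theorem fst_add_two_mul_snd_le_of_mul_eq_exampleThree (hgh : g * h = exampleThree R)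
    (hunit : IsUnit (monomialCurve ![1, -1] ![1, 2] g)) {m : Fin 2 →₀ ℕ} (hm : m ∈ g.support) :
    m 0 + 2 * m 1 ≤ 4 := by
  obtain ⟨n, hn, hn_weight, -⟩ := exists_mem_support_of_isUnit_monomialCurve hunit (q := h)
    (n := 7) (by simp [hgh, monomialCurve_exampleThree_one_neg_one])
  have hn_eq : n 0 + n 1 * 2 = 7 := by simpa [Finsupp.weight_eq_sum] using hn_weight
  obtain ⟨k, hk, hle⟩ := exists_mem_support_mul_add_le (Finsupp.weight ![1, 2]) hm hn
  have hweight : m 0 + m 1 * 2 + (n 0 + n 1 * 2) ≤ k 0 + k 1 * 2 := by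
    simpa [Finsupp.weight_eq_sum] using hle
  have hk_le := fst_add_two_mul_snd_le_of_mem_support_exampleThree (hgh ▸ hk)
  omega

theorem isUnit_of_mul_eq_exampleThree_of_constantCoeff_ne_zero (hgh : g * h = exampleThree R)
    (hg : constantCoeff g ≠ 0) : IsUnit g := by
  have hdvd : g ∣ exampleThree R := ⟨h, hgh.symm⟩
  have hline : IsUnit (monomialCurve ![1, 0] ![1, 1] g) :=
    isUnit_monomialCurve_of_dvd (by simp) hdvd monomialCurve_exampleThree_one_zero.dvd hg
  have hparabola : IsUnit (monomialCurve ![1, -1] ![1, 2] g) :=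
    isUnit_monomialCurve_of_dvd (n := 7) (by simp) hdvd
      (by simp [monomialCurve_exampleThree_one_neg_one]) hg
  refine isUnit_of_isUnit_monomialCurve (by simp) (by simp) (fun m hm k hk hmk => ?_) hparabola
  have hm_le := fst_le_snd_of_mul_eq_exampleThree hgh hline hm
  have hk_le := fst_le_snd_of_mul_eq_exampleThree hgh hline hk
  have hm_weight := fst_add_two_mul_snd_le_of_mul_eq_exampleThree hgh hparabola hm
  have hmk_weight : m 0 + m 1 * 2 = k 0 + k 1 * 2 := by simpa [Finsupp.weight_eq_sum] using hmk
  have h0 : m 0 = k 0 := by omega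
  have h1 : m 1 = k 1 := by omega
  exact Finsupp.ext (Fin.forall_fin_two.mpr ⟨h0, h1⟩)

variable (R) in
theorem stmt17_general : Irreducible (exampleThree R) := by
  have hirr : Irreducible (monomialCurve ![0, 1] ![1, 1] (exampleThree R)) := by
    rw [monomialCurve_exampleThree_zero_one]
    exact Polynomial.irreducible_X
  have constantCoeff_ne_zero {p : MvPolynomial (Fin 2) R}
      (hp : IsUnit (monomialCurve ![0, 1] ![1, 1] p)) : constantCoeff p ≠ 0 := by
    rw [← coeff_zero_monomialCurve ![0, 1] (w := ![1, 1]) (by simp)]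
    exact (hp.map Polynomial.constantCoeff).ne_zero
  refine ⟨fun hf => hirr.not_isUnit (hf.map _), fun g h hgh => ?_⟩
  rcases hirr.isUnit_or_isUnit (by rw [hgh, map_mul]) with hg | hh
  · exact .inl (isUnit_of_mul_eq_exampleThree_of_constantCoeff_ne_zero hgh.symm
      (constantCoeff_ne_zero hg))
  · exact .inr (isUnit_of_mul_eq_exampleThree_of_constantCoeff_ne_zero (by rw [hgh, mul_comm])
      (constantCoeff_ne_zero hh))

end ExampleThreeFactors

/-- Example 3: `Y + X² + XY³ + X³Y⁴ + X⁵Y³` is nearly irreducible. -/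
theorem stmt17 :
    NearlyIrreducible
      ((X 1 : P2) + X 0 ^ 2 + X 0 * X 1 ^ 3 + X 0 ^ 3 * X 1 ^ 4 +
        X 0 ^ 5 * X 1 ^ 3) :=
  nearlyIrreducible_of_irreducible (stmt17_general ℂ)
end
end
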